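/- There is an absolute constant c > 0 such that for every integer d ≥ 1 and every α ∈ (0, 1/600], there exists a set C of d-dimensional Gaussian measures with the following two properties: (i) C is an α-cover of G_d in total variation distance, i.e., for every g ∈ G_d there exists g' ∈ C with dtv(g, g') ≤ α; and (ii) C is locally small, i.e., for every g ∈ G_d, the set {g' ∈ C : dtv(g', g) ≤ 2α} has cardinality at most 2^{c·d²}. -/

import Mathlib

open MeasureTheory ProbabilityTheory Matrix

/-- Total variation distance between two measures. -/
noncomputable def tvDist {X : Type*} [MeasurableSpace X] (μ ν : Measure X) : ℝ :=
  ⨆ E : {E : Set X // MeasurableSet E}, |(μ E.1).toReal - (ν E.1).toReal|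

/-- Total variation distance from a measure to a family of measures. -/
noncomputable def tvDistSet {X : Type*} [MeasurableSpace X] (g : Measure X)
    (F : Set (Measure X)) : ℝ :=
  ⨅ f : F, tvDist g f.1

/-- A `(C, α)`-accurate `(m, ρ, L)`-stable list decoder for `F`. -/
def IsStableListDecoder {X : Type*} [MeasurableSpace X] (F : Set (Measure X))
    (C α : ℝ) (m : ℕ) (ρ : ℝ) (L : ℝ)
    (A : (Fin m → X) → Set (Measure X)) : Prop :=
  (∀ S, (A S).Finite ∧ ((A S).ncard : ℝ) ≤ L ∧ ∀ μ ∈ A S, IsProbabilityMeasure μ) ∧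
  (∀ g : Measure X, IsProbabilityMeasure g →
    ∃ gt : Measure X, IsProbabilityMeasure gt ∧
      MeasurableSet {S : Fin m → X | gt ∈ A S} ∧
      ENNReal.ofReal ρ ≤ Measure.pi (fun _ : Fin m => g) {S | gt ∈ A S} ∧
      tvDist gt g ≤ α + C * tvDistSet g F)

instance {X : Type*} [MeasurableSpace X] : MeasurableSpace (ProbabilityMeasure X) :=
  inferInstanceAs (MeasurableSpace {μ : Measure X // IsProbabilityMeasure μ})

/-- `(ε, δ)`-differential privacy of a kernel on datasets of size `n`. -/
def IsDPKernel {X Y : Type*} [MeasurableSpace X] [MeasurableSpace Y] {n : ℕ}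
    (M : Kernel (Fin n → X) Y) (ε δ : ℝ) : Prop :=
  ∀ D D' : Fin n → X, (∃ i, D i ≠ D' i ∧ ∀ j, j ≠ i → D j = D' j) →
    ∀ E : Set Y, MeasurableSet E →
      M D E ≤ ENNReal.ofReal (Real.exp ε) * M D' E + ENNReal.ofReal δ

/-- `F` is `(ε,δ)`-privately `C`-agnostic `(n,α,β)`-learnable. -/
def PrivAgnosticLearnable {X : Type*} [MeasurableSpace X] (F : Set (Measure X))
    (ε δ C : ℝ) (n : ℕ) (α β : ℝ) : Prop :=
  ∃ M : Kernel (Fin n → X) (ProbabilityMeasure X), IsMarkovKernel M ∧ IsDPKernel M ε δ ∧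
    ∀ g : Measure X, IsProbabilityMeasure g →
      ENNReal.ofReal (1 - β) ≤
        ∫⁻ S, M S {f : ProbabilityMeasure X | tvDist (f : Measure X) g ≤ C * tvDistSet g F + α}
          ∂(Measure.pi fun _ : Fin n => g)

/-- The class of `k`-mixtures of `F`. -/
noncomputable def kmix {X : Type*} [MeasurableSpace X] (k : ℕ) (F : Set (Measure X)) :
    Set (Measure X) :=
  {ν | ∃ (w : Fin k → ℝ) (f : Fin k → Measure X),
    (∀ i, 0 ≤ w i) ∧ (∑ i, w i = 1) ∧ (∀ i, f i ∈ F) ∧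
    ν = ∑ i, ENNReal.ofReal (w i) • f i}

/-- Density of the `d`-dimensional Gaussian with mean `μ` and covariance `S`. -/
noncomputable def gaussianPdf (d : ℕ) (μ : Fin d → ℝ) (S : Matrix (Fin d) (Fin d) ℝ)
    (x : Fin d → ℝ) : ℝ :=
  (Real.sqrt ((2 * Real.pi) ^ d * S.det))⁻¹ *
    Real.exp (-(1 / 2) * ((x - μ) ⬝ᵥ (S⁻¹ *ᵥ (x - μ))))

/-- The family of `d`-dimensional Gaussian measures. -/
noncomputable def Gd (d : ℕ) : Set (Measure (Fin d → ℝ)) :=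
  {ν | ∃ (μ : Fin d → ℝ) (S : Matrix (Fin d) (Fin d) ℝ), S.PosDef ∧
    ν = volume.withDensity fun x => ENNReal.ofReal (gaussianPdf d μ S x)}

/-!
A maximal `α`-separated subfamily `C` of the Gaussians is an `α`-cover, so only its local size has
to be bounded. Since total variation distance is invariant under affine maps, the center `g` may be
taken standard. Near `N(0, I)` the vector `(m, S - I)` is then a system of bi-Lipschitz coordinates
for `N(m, S)` with absolute constants: after an orthogonal change of variables `S` is diagonal, both
measures are products, and their Hellinger integral, which controls total variation distance from
both sides, factors into explicit one-dimensional integrals. Hence the members of `C` within `2α` of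
`g` become `α / 4`-separated points of a ball of radius `O(α)` in dimension `d + d²`, and comparing
volumes leaves at most `2 ^ O(d²)` of them.
-/

open scoped NNReal

section TotalVariation

variable {X : Type*} [MeasurableSpace X] {μ ν : Measure X}

lemma abs_measureReal_sub_le_tvDist [IsProbabilityMeasure μ] [IsProbabilityMeasure ν]
    {E : Set X} (hE : MeasurableSet E) : |μ.real E - ν.real E| ≤ tvDist μ ν := by
  have hbdd : BddAbove (Set.range fun F : {F : Set X // MeasurableSet F} ↦
      |(μ F.1).toReal - (ν F.1).toReal|) := by
    refine ⟨1, ?_⟩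
    rintro _ ⟨F, rfl⟩
    exact abs_sub_le_of_nonneg_of_le ENNReal.toReal_nonneg (measureReal_le_one (μ := μ))
      ENNReal.toReal_nonneg (measureReal_le_one (μ := ν))
  exact le_ciSup hbdd ⟨E, hE⟩

lemma tvDist_le {a : ℝ} (h : ∀ E, MeasurableSet E → |μ.real E - ν.real E| ≤ a) :
    tvDist μ ν ≤ a :=
  have : Nonempty {E : Set X // MeasurableSet E} := ⟨⟨∅, MeasurableSet.empty⟩⟩
  ciSup_le fun E ↦ h E.1 E.2

lemma tvDist_nonneg (μ ν : Measure X) : 0 ≤ tvDist μ ν :=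
  Real.iSup_nonneg fun _ ↦ abs_nonneg _

lemma tvDist_comm (μ ν : Measure X) : tvDist μ ν = tvDist ν μ := by
  simp only [tvDist, abs_sub_comm]

lemma tvDist_self (μ : Measure X) : tvDist μ μ = 0 := by
  simp [tvDist]

lemma tvDist_map_measurableEquiv {Y : Type*} [MeasurableSpace Y] (e : X ≃ᵐ Y)
    (μ ν : Measure X) : tvDist (μ.map e) (ν.map e) = tvDist μ ν := by
  refine Function.Surjective.iSup_congr
    (fun E : {E : Set Y // MeasurableSet E} ↦
      (⟨e ⁻¹' E.1, e.measurable E.2⟩ : {E : Set X // MeasurableSet E})) (fun F ↦ ?_) fun E ↦ ?_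
  · exact ⟨⟨e.symm ⁻¹' F.1, e.symm.measurable F.2⟩, Subtype.ext (by simp [← Set.preimage_comp])⟩
  · simp only [Measure.map_apply e.measurable E.2]

end TotalVariation

section Density

variable {X : Type*} [MeasurableSpace X]

/-- The measure with real-valued density `p` with respect to `μ`; the negative part of `p` is
ignored. -/
noncomputable def ofDensity (μ : Measure X) (p : X → ℝ) : Measure X :=
  μ.withDensity fun x ↦ ENNReal.ofReal (p x)

/-- `p` is a probability density with respect to `μ`. -/
structure IsProbDensity (μ : Measure X) (p : X → ℝ) : Prop where
  measurable : Measurable p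
  nonneg : ∀ x, 0 ≤ p x
  integral_eq_one : ∫ x, p x ∂μ = 1

variable {μ : Measure X} {p q : X → ℝ}

namespace IsProbDensity

lemma integrable (hp : IsProbDensity μ p) : Integrable p μ :=
  integrable_of_integral_eq_one hp.integral_eq_one

lemma measureReal_ofDensity (hp : IsProbDensity μ p) {E : Set X} (hE : MeasurableSet E) :
    (ofDensity μ p).real E = ∫ x in E, p x ∂μ := by
  rw [Measure.real, ofDensity, withDensity_apply _ hE, ← ofReal_integral_eq_lintegral_ofReal
    hp.integrable.integrableOn (Filter.Eventually.of_forall hp.nonneg),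
    ENNReal.toReal_ofReal (integral_nonneg hp.nonneg)]

lemma isProbabilityMeasure_ofDensity (hp : IsProbDensity μ p) :
    IsProbabilityMeasure (ofDensity μ p) where
  measure_univ := by
    rw [ofDensity, withDensity_apply _ MeasurableSet.univ, Measure.restrict_univ,
      ← ofReal_integral_eq_lintegral_ofReal hp.integrable (Filter.Eventually.of_forall hp.nonneg),
      hp.integral_eq_one, ENNReal.ofReal_one]

end IsProbDensity

lemma two_mul_abs_setIntegral_le_integral_abs {f : X → ℝ} (hf : Integrable f μ)
    (hf0 : ∫ x, f x ∂μ = 0) {E : Set X} (hE : MeasurableSet E) :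
    2 * |∫ x in E, f x ∂μ| ≤ ∫ x, |f x| ∂μ := by
  have hcompl : ∫ x in Eᶜ, f x ∂μ = -∫ x in E, f x ∂μ := by
    linarith [integral_add_compl hE hf]
  calc 2 * |∫ x in E, f x ∂μ| = |∫ x in E, f x ∂μ| + |∫ x in Eᶜ, f x ∂μ| := by
        rw [hcompl, abs_neg, two_mul]
    _ ≤ (∫ x in E, |f x| ∂μ) + ∫ x in Eᶜ, |f x| ∂μ :=
        add_le_add abs_integral_le_integral_abs abs_integral_le_integral_abs
    _ = ∫ x, |f x| ∂μ := integral_add_compl hE hf.abs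

lemma integral_abs_eq_two_mul_setIntegral {f : X → ℝ} (hfm : Measurable f) (hf : Integrable f μ)
    (hf0 : ∫ x, f x ∂μ = 0) : ∫ x, |f x| ∂μ = 2 * ∫ x in {x | 0 ≤ f x}, f x ∂μ := by
  have hE : MeasurableSet {x | 0 ≤ f x} := measurableSet_le measurable_const hfm
  have hpos : ∫ x in {x | 0 ≤ f x}, |f x| ∂μ = ∫ x in {x | 0 ≤ f x}, f x ∂μ :=
    setIntegral_congr_fun hE fun x hx ↦ abs_of_nonneg hx
  have hneg : ∫ x in {x | 0 ≤ f x}ᶜ, |f x| ∂μ = ∫ x in {x | 0 ≤ f x}ᶜ, -f x ∂μ :=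
    setIntegral_congr_fun hE.compl fun x hx ↦ abs_of_neg (not_le.1 hx)
  rw [← integral_add_compl hE hf.abs, hpos, hneg, integral_neg]
  linarith [integral_add_compl hE hf]

theorem two_mul_tvDist_ofDensity (hp : IsProbDensity μ p) (hq : IsProbDensity μ q) :
    2 * tvDist (ofDensity μ p) (ofDensity μ q) = ∫ x, |p x - q x| ∂μ := by
  have hdiff : Integrable (fun x ↦ p x - q x) μ := hp.integrable.sub hq.integrable
  have hzero : ∫ x, (p x - q x) ∂μ = 0 := by
    rw [integral_sub hp.integrable hq.integrable, hp.integral_eq_one, hq.integral_eq_one, sub_self]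
  have hset {E : Set X} (hE : MeasurableSet E) :
      (ofDensity μ p).real E - (ofDensity μ q).real E = ∫ x in E, (p x - q x) ∂μ := by
    rw [hp.measureReal_ofDensity hE, hq.measureReal_ofDensity hE,
      integral_sub hp.integrable.integrableOn hq.integrable.integrableOn]
  have := hp.isProbabilityMeasure_ofDensity
  have := hq.isProbabilityMeasure_ofDensity
  refine le_antisymm ?_ ?_
  · rw [← le_div_iff₀' two_pos]
    refine tvDist_le fun E hE ↦ ?_
    rw [hset hE, le_div_iff₀' two_pos]
    exact two_mul_abs_setIntegral_le_integral_abs hdiff hzero hE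
  · have hmeas : Measurable fun x ↦ p x - q x := hp.measurable.sub hq.measurable
    have hE : MeasurableSet {x | 0 ≤ p x - q x} := measurableSet_le measurable_const hmeas
    rw [integral_abs_eq_two_mul_setIntegral hmeas hdiff hzero, ← hset hE]
    gcongr
    exact (le_abs_self _).trans (abs_measureReal_sub_le_tvDist hE)

end Density

section PointwiseBounds

lemma abs_exp_sub_one_le_exp_abs_sub_one (z : ℝ) : |Real.exp z - 1| ≤ Real.exp |z| - 1 := by
  rcases le_total 0 z with hz | hz
  · rw [abs_of_nonneg hz, abs_of_nonneg (sub_nonneg.2 (Real.one_le_exp hz))]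
  · have hinv : Real.exp z * Real.exp (-z) = 1 := by
      rw [← Real.exp_add, add_neg_cancel, Real.exp_zero]
    rw [abs_of_nonpos hz, abs_of_nonpos (sub_nonpos.2 (Real.exp_le_one_iff.2 hz))]
    nlinarith [sq_nonneg (Real.exp z - 1), Real.exp_pos z, Real.exp_pos (-z),
      sq_nonneg (Real.exp z - Real.exp (-z))]

lemma abs_exp_sub_one_le_mul_exp {δ : ℝ} (hδ : 0 < δ) (hδ1 : δ ≤ 1) (z : ℝ) :
    |Real.exp z - 1| ≤ δ * Real.exp (|z| / δ) := by
  have hbernoulli := rpow_one_add_le_one_add_mul_self (s := Real.exp (|z| / δ) - 1)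
    (by linarith [Real.exp_pos (|z| / δ)]) hδ.le hδ1
  rw [add_sub_cancel, ← Real.exp_mul, div_mul_cancel₀ _ hδ.ne'] at hbernoulli
  linarith [abs_exp_sub_one_le_exp_abs_sub_one z]

lemma exp_sub_one_pow_four_le {δ : ℝ} (hδ : 0 < δ) (hδ1 : δ ≤ 1) (z : ℝ) :
    (Real.exp z - 1) ^ 4 ≤ δ ^ 4 * (Real.exp (4 * z / δ) + Real.exp (-(4 * z / δ))) :=
  calc (Real.exp z - 1) ^ 4 = |Real.exp z - 1| ^ 4 := (Even.pow_abs (by decide) _).symm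
    _ ≤ (δ * Real.exp (|z| / δ)) ^ 4 :=
        pow_le_pow_left₀ (abs_nonneg _) (abs_exp_sub_one_le_mul_exp hδ hδ1 z) 4
    _ = δ ^ 4 * Real.exp |4 * z / δ| := by
        rw [mul_pow, ← Real.exp_nat_mul, abs_div, abs_mul, abs_of_pos hδ, Nat.abs_ofNat,
          Nat.cast_ofNat, mul_div_assoc]
    _ ≤ δ ^ 4 * (Real.exp (4 * z / δ) + Real.exp (-(4 * z / δ))) := by
        gcongr
        exact Real.exp_abs_le _

lemma sq_div_le_abs_add_pow_four_div {t : ℝ} (ht : 0 < t) (x : ℝ) :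
    x ^ 2 / t ≤ |x| + x ^ 4 / t ^ 3 := by
  obtain ⟨u, rfl⟩ : ∃ u, x = t * u := ⟨x / t, by field_simp⟩
  have hscaled : |u| ^ 2 ≤ |u| + |u| ^ 4 := by
    rcases le_total |u| 1 with h | h
    · nlinarith [abs_nonneg u, pow_nonneg (abs_nonneg u) 4]
    · nlinarith [abs_nonneg u, pow_le_pow_right₀ h (show 2 ≤ 4 by norm_num)]
  rw [sq_abs, Even.pow_abs (by decide)] at hscaled
  have h2 : (t * u) ^ 2 / t = t * u ^ 2 := by field_simp
  have h4 : (t * u) ^ 4 / t ^ 3 = t * u ^ 4 := by field_simp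
  rw [h2, h4, abs_mul, abs_of_pos ht, ← mul_add]
  gcongr

-- With `X = √(q / p) - 1`, combines `X ^ 2 / t ≤ |X| + X ^ 4 / t ^ 3` and `p * |X| ≤ |p - q|`.
lemma sqrt_sub_sqrt_sq_div_le {p q r t : ℝ} (hp : 0 < p) (hq : 0 < q) (hr : 2 ≤ r) (ht : 0 < t) :
    (√p - √q) ^ 2 / t ≤
      |p - q| + 16 / (r ^ 4 * t ^ 3) * (p ^ (1 - r) * q ^ r + p ^ (1 - -r) * q ^ (-r)) := by
  obtain ⟨z, rfl⟩ : ∃ z, q = p * Real.exp (2 * z) := by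
    refine ⟨Real.log (q / p) / 2, ?_⟩
    rw [mul_div_cancel₀ _ two_ne_zero, Real.exp_log (div_pos hq hp), mul_div_cancel₀ _ hp.ne']
  set X := Real.exp z - 1 with hX
  have hX1 : -1 ≤ X := by linarith [Real.exp_pos z]
  have hexp : Real.exp (2 * z) = (X + 1) ^ 2 := by
    rw [hX, sub_add_cancel, ← Real.exp_nat_mul, Nat.cast_ofNat]
  have hsq : (√p - √(p * Real.exp (2 * z))) ^ 2 = p * X ^ 2 := by
    rw [hexp, Real.sqrt_mul hp.le, Real.sqrt_sq (by linarith)]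
    linear_combination X ^ 2 * Real.sq_sqrt hp.le
  have habs : p * |X| ≤ |p - p * Real.exp (2 * z)| := by
    rw [hexp, show p - p * (X + 1) ^ 2 = -(p * (X * (X + 2))) by ring, abs_neg, abs_mul, abs_mul,
      abs_of_pos hp]
    gcongr
    exact le_mul_of_one_le_right (abs_nonneg X) (by linarith [le_abs_self (X + 2)])
  have hpow (s : ℝ) : p ^ (1 - s) * (p * Real.exp (2 * z)) ^ s = p * Real.exp (2 * z * s) := by
    rw [Real.mul_rpow hp.le (Real.exp_pos _).le, ← mul_assoc, ← Real.rpow_add hp, sub_add_cancel,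
      Real.rpow_one, ← Real.exp_mul]
  have hfour : X ^ 4 ≤ 16 / r ^ 4 * (Real.exp (2 * z * r) + Real.exp (2 * z * -r)) := by
    have h := exp_sub_one_pow_four_le (δ := 2 / r) (by positivity)
      ((div_le_one (by linarith)).2 hr) z
    have hz : 4 * z / (2 / r) = 2 * z * r := by field_simp; ring
    rw [hz, ← mul_neg, div_pow] at h
    norm_num at h ⊢
    exact h
  rw [hpow, hpow, hsq]
  calc p * X ^ 2 / t = p * (X ^ 2 / t) := mul_div_assoc _ _ _
    _ ≤ p * (|X| + X ^ 4 / t ^ 3) := by gcongr; exact sq_div_le_abs_add_pow_four_div ht X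
    _ = p * |X| + p / t ^ 3 * X ^ 4 := by ring
    _ ≤ |p - p * Real.exp (2 * z)| +
          p / t ^ 3 * (16 / r ^ 4 * (Real.exp (2 * z * r) + Real.exp (2 * z * -r))) := by gcongr
    _ = _ := by field_simp

lemma abs_sub_eq_abs_sqrt_sub_mul_sqrt_add {p q : ℝ} (hp : 0 ≤ p) (hq : 0 ≤ q) :
    |p - q| = |√p - √q| * (√p + √q) := by
  have hfactor : p - q = (√p - √q) * (√p + √q) := by
    linear_combination Real.sq_sqrt hq - Real.sq_sqrt hp
  rw [hfactor, abs_mul, abs_of_nonneg (add_nonneg (Real.sqrt_nonneg p) (Real.sqrt_nonneg q))]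

lemma sqrt_sub_sqrt_sq_le_abs_sub {p q : ℝ} (hp : 0 ≤ p) (hq : 0 ≤ q) :
    (√p - √q) ^ 2 ≤ |p - q| := by
  rw [abs_sub_eq_abs_sqrt_sub_mul_sqrt_add hp hq, ← sq_abs, sq]
  gcongr
  rw [abs_le]
  constructor <;> linarith [Real.sqrt_nonneg p, Real.sqrt_nonneg q]

lemma two_mul_abs_sub_le {p q δ : ℝ} (hp : 0 ≤ p) (hq : 0 ≤ q) (hδ : 0 < δ) :
    2 * |p - q| ≤ (√p - √q) ^ 2 / δ + δ * (√p + √q) ^ 2 := by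
  have hamgm := two_mul_le_add_sq (|√p - √q|) (δ * (√p + √q))
  rw [abs_sub_eq_abs_sqrt_sub_mul_sqrt_add hp hq, ← sub_nonneg]
  have hexpand : (√p - √q) ^ 2 / δ + δ * (√p + √q) ^ 2 - 2 * (|√p - √q| * (√p + √q)) =
      (|√p - √q| ^ 2 + (δ * (√p + √q)) ^ 2 - 2 * |√p - √q| * (δ * (√p + √q))) / δ := by
    rw [sq_abs]
    field_simp
  rw [hexpand]
  exact div_nonneg (sub_nonneg.2 hamgm) hδ.le

end PointwiseBounds

section Hellinger

variable {X : Type*} [MeasurableSpace X] {μ : Measure X} {p q : X → ℝ}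

/-- The Hellinger integral of order `r` of the densities `p` and `q`; every real `r` is allowed,
not only `0 < r < 1`. -/
noncomputable def hellingerIntegral (μ : Measure X) (p q : X → ℝ) (r : ℝ) : ℝ :=
  ∫ x, p x ^ (1 - r) * q x ^ r ∂μ

lemma hellingerIntegral_half (μ : Measure X) (p q : X → ℝ) :
    hellingerIntegral μ p q (1 / 2) = ∫ x, √(p x) * √(q x) ∂μ := by
  rw [hellingerIntegral, sub_half]
  simp only [Real.sqrt_eq_rpow]

namespace IsProbDensity

lemma integrable_sqrt_mul_sqrt (hp : IsProbDensity μ p) (hq : IsProbDensity μ q) :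
    Integrable (fun x ↦ √(p x) * √(q x)) μ := by
  refine (hp.integrable.add hq.integrable).mono'
    (hp.measurable.sqrt.mul hq.measurable.sqrt).aestronglyMeasurable (.of_forall fun x ↦ ?_)
  rw [Real.norm_of_nonneg (by positivity), Pi.add_apply]
  nlinarith [sq_nonneg (√(p x) - √(q x)), Real.sq_sqrt (hp.nonneg x), Real.sq_sqrt (hq.nonneg x),
    Real.sqrt_nonneg (p x), Real.sqrt_nonneg (q x), hp.nonneg x, hq.nonneg x]

lemma integrable_and_integral_sqrt_sub_sqrt_sq_eq (hp : IsProbDensity μ p)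
    (hq : IsProbDensity μ q) :
    Integrable (fun x ↦ (√(p x) - √(q x)) ^ 2) μ ∧
      ∫ x, (√(p x) - √(q x)) ^ 2 ∂μ = 2 * (1 - hellingerIntegral μ p q (1 / 2)) := by
  have hexpand : (fun x ↦ (√(p x) - √(q x)) ^ 2) =
      fun x ↦ p x + q x - 2 * (√(p x) * √(q x)) := by
    ext x
    linear_combination Real.sq_sqrt (hp.nonneg x) + Real.sq_sqrt (hq.nonneg x)
  have hprod := (hp.integrable_sqrt_mul_sqrt hq).const_mul 2
  have hsum : Integrable (fun x ↦ p x + q x) μ := hp.integrable.add hq.integrable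
  rw [hexpand, integral_sub hsum hprod, integral_add hp.integrable hq.integrable,
    integral_const_mul, hp.integral_eq_one, hq.integral_eq_one, hellingerIntegral_half]
  exact ⟨hsum.sub hprod, by ring⟩

lemma hellingerIntegral_half_le_one (hp : IsProbDensity μ p) (hq : IsProbDensity μ q) :
    hellingerIntegral μ p q (1 / 2) ≤ 1 := by
  have hnonneg : 0 ≤ ∫ x, (√(p x) - √(q x)) ^ 2 ∂μ := integral_nonneg fun x ↦ sq_nonneg _
  linarith [(hp.integrable_and_integral_sqrt_sub_sqrt_sq_eq hq).2]

lemma integrable_and_integral_sqrt_add_sqrt_sq_le (hp : IsProbDensity μ p)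
    (hq : IsProbDensity μ q) :
    Integrable (fun x ↦ (√(p x) + √(q x)) ^ 2) μ ∧ ∫ x, (√(p x) + √(q x)) ^ 2 ∂μ ≤ 4 := by
  have hexpand : (fun x ↦ (√(p x) + √(q x)) ^ 2) =
      fun x ↦ (√(p x) - √(q x)) ^ 2 + 4 * (√(p x) * √(q x)) := by
    ext x
    ring
  obtain ⟨hint, hval⟩ := hp.integrable_and_integral_sqrt_sub_sqrt_sq_eq hq
  have hprod := (hp.integrable_sqrt_mul_sqrt hq).const_mul 4
  rw [hexpand, integral_add hint hprod, hval, integral_const_mul, ← hellingerIntegral_half]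
  exact ⟨hint.add hprod, by linarith [hp.hellingerIntegral_half_le_one hq]⟩

theorem one_sub_hellingerIntegral_le_tvDist (hp : IsProbDensity μ p) (hq : IsProbDensity μ q) :
    1 - hellingerIntegral μ p q (1 / 2) ≤ tvDist (ofDensity μ p) (ofDensity μ q) := by
  obtain ⟨hint, hval⟩ := hp.integrable_and_integral_sqrt_sub_sqrt_sq_eq hq
  have hmono : ∫ x, (√(p x) - √(q x)) ^ 2 ∂μ ≤ ∫ x, |p x - q x| ∂μ :=
    integral_mono hint (hp.integrable.sub hq.integrable).abs
      fun x ↦ sqrt_sub_sqrt_sq_le_abs_sub (hp.nonneg x) (hq.nonneg x)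
  linarith [two_mul_tvDist_ofDensity hp hq]

theorem tvDist_sq_le_two_mul_one_sub_hellingerIntegral (hp : IsProbDensity μ p)
    (hq : IsProbDensity μ q) :
    tvDist (ofDensity μ p) (ofDensity μ q) ^ 2 ≤ 2 * (1 - hellingerIntegral μ p q (1 / 2)) := by
  set τ := tvDist (ofDensity μ p) (ofDensity μ q) with hτ
  rcases (tvDist_nonneg (ofDensity μ p) (ofDensity μ q)).eq_or_lt with h0 | hpos
  · rw [hτ, ← h0]
    linarith [hp.hellingerIntegral_half_le_one hq]
  obtain ⟨hsub, hval⟩ := hp.integrable_and_integral_sqrt_sub_sqrt_sq_eq hq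
  obtain ⟨hadd, hadd4⟩ := hp.integrable_and_integral_sqrt_add_sqrt_sq_le hq
  have hamgm : ∫ x, 2 * |p x - q x| ∂μ ≤
      ∫ x, ((√(p x) - √(q x)) ^ 2 / (τ / 2) + τ / 2 * (√(p x) + √(q x)) ^ 2) ∂μ :=
    integral_mono ((hp.integrable.sub hq.integrable).abs.const_mul 2)
      ((hsub.div_const _).add (hadd.const_mul _))
      fun x ↦ two_mul_abs_sub_le (hp.nonneg x) (hq.nonneg x) (half_pos hpos)
  rw [integral_add (hsub.div_const _) (hadd.const_mul _), integral_div, integral_const_mul, hval,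
    integral_const_mul, ← two_mul_tvDist_ofDensity hp hq, ← hτ] at hamgm
  have hbound : 2 * τ ≤ 2 * (1 - hellingerIntegral μ p q (1 / 2)) / (τ / 2) := by
    nlinarith
  rw [le_div_iff₀ (half_pos hpos)] at hbound
  linarith

-- The moment method `‖X‖₂² ≤ t ‖X‖₁ + t⁻² ‖X‖₄⁴`, for `X = √(q / p) - 1` under the measure `p μ`.
theorem one_sub_hellingerIntegral_div_le_tvDist_add (hp : IsProbDensity μ p)
    (hq : IsProbDensity μ q) (hp_pos : ∀ x, 0 < p x) (hq_pos : ∀ x, 0 < q x) {r t : ℝ}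
    (hr : 2 ≤ r) (ht : 0 < t) (hint : Integrable (fun x ↦ p x ^ (1 - r) * q x ^ r) μ)
    (hint' : Integrable (fun x ↦ p x ^ (1 - -r) * q x ^ (-r)) μ) :
    (1 - hellingerIntegral μ p q (1 / 2)) / t ≤ tvDist (ofDensity μ p) (ofDensity μ q) +
      8 / (r ^ 4 * t ^ 3) * (hellingerIntegral μ p q r + hellingerIntegral μ p q (-r)) := by
  obtain ⟨hsub, hval⟩ := hp.integrable_and_integral_sqrt_sub_sqrt_sq_eq hq
  have habs := (hp.integrable.sub hq.integrable).abs
  have hmoment := (hint.add hint').const_mul (16 / (r ^ 4 * t ^ 3))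
  have hmono : ∫ x, (√(p x) - √(q x)) ^ 2 / t ∂μ ≤ ∫ x, (|p x - q x| + 16 / (r ^ 4 * t ^ 3) *
      (p x ^ (1 - r) * q x ^ r + p x ^ (1 - -r) * q x ^ (-r))) ∂μ :=
    integral_mono (hsub.div_const t) (habs.add hmoment)
      fun x ↦ sqrt_sub_sqrt_sq_div_le (hp_pos x) (hq_pos x) hr ht
  have hsplit : ∫ x, (|p x - q x| + 16 / (r ^ 4 * t ^ 3) *
      (p x ^ (1 - r) * q x ^ r + p x ^ (1 - -r) * q x ^ (-r))) ∂μ =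
        2 * tvDist (ofDensity μ p) (ofDensity μ q) + 16 / (r ^ 4 * t ^ 3) *
          (hellingerIntegral μ p q r + hellingerIntegral μ p q (-r)) := by
    rw [two_mul_tvDist_ofDensity hp hq, hellingerIntegral, hellingerIntegral,
      ← integral_add hint hint', ← integral_const_mul]
    exact integral_add habs hmoment
  rw [hsplit, integral_div, hval, mul_div_assoc] at hmono
  have hhalf : 16 / (r ^ 4 * t ^ 3) = 2 * (8 / (r ^ 4 * t ^ 3)) := by ring
  rw [hhalf] at hmono
  linarith

end IsProbDensity

end Hellinger

section Pi

lemma prod_rpow_mul_prod_rpow {ι : Type*} [Fintype ι] {a b : ι → ℝ} (ha : ∀ i, 0 ≤ a i)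
    (hb : ∀ i, 0 ≤ b i) (s r : ℝ) :
    (∏ i, a i) ^ s * (∏ i, b i) ^ r = ∏ i, a i ^ s * b i ^ r := by
  rw [Finset.prod_mul_distrib, Real.finsetProd_rpow _ _ fun i _ ↦ ha i,
    Real.finsetProd_rpow _ _ fun i _ ↦ hb i]

variable {ι : Type*} [Fintype ι] {Y : ι → Type*} [∀ i, MeasurableSpace (Y i)]
  {ν : ∀ i, Measure (Y i)} [∀ i, SigmaFinite (ν i)] {f g : ∀ i, Y i → ℝ}

lemma IsProbDensity.pi (hf : ∀ i, IsProbDensity (ν i) (f i)) :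
    IsProbDensity (Measure.pi ν) fun x ↦ ∏ i, f i (x i) where
  measurable := Finset.measurable_prod _ fun i _ ↦ (hf i).measurable.comp (measurable_pi_apply i)
  nonneg x := Finset.prod_nonneg fun i _ ↦ (hf i).nonneg (x i)
  integral_eq_one := by
    rw [integral_fintype_prod_eq_prod]
    exact Finset.prod_eq_one fun i _ ↦ (hf i).integral_eq_one

lemma hellingerIntegral_pi (hf : ∀ i y, 0 ≤ f i y) (hg : ∀ i y, 0 ≤ g i y) (r : ℝ) :
    hellingerIntegral (Measure.pi ν) (fun x ↦ ∏ i, f i (x i)) (fun x ↦ ∏ i, g i (x i)) r =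
      ∏ i, hellingerIntegral (ν i) (f i) (g i) r := by
  simp only [hellingerIntegral,
    prod_rpow_mul_prod_rpow (fun i ↦ hf i _) fun i ↦ hg i _]
  exact integral_fintype_prod_eq_prod fun i y ↦ f i y ^ (1 - r) * g i y ^ r

lemma integrable_hellinger_pi (hf : ∀ i y, 0 ≤ f i y) (hg : ∀ i y, 0 ≤ g i y) {r : ℝ}
    (hint : ∀ i, Integrable (fun y ↦ f i y ^ (1 - r) * g i y ^ r) (ν i)) :
    Integrable (fun x ↦ (∏ i, f i (x i)) ^ (1 - r) * (∏ i, g i (x i)) ^ r) (Measure.pi ν) := by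
  simp only [prod_rpow_mul_prod_rpow (fun i ↦ hf i _) fun i ↦ hg i _]
  exact Integrable.fintype_prod_dep (f := fun i y ↦ f i y ^ (1 - r) * g i y ^ r) hint

end Pi

section GaussianReal

/-- The logarithm of the Hellinger integral of order `r` of `N(0, 1)` and `N(m, v)`, valid when
`0 < (1 - r) * v + r`. -/
noncomputable def logHellinger (r m v : ℝ) : ℝ :=
  ((1 - r) * Real.log v - Real.log ((1 - r) * v + r)
    - r * (1 - r) * m ^ 2 / ((1 - r) * v + r)) / 2

lemma isProbDensity_gaussianPDFReal (m : ℝ) {v : ℝ≥0} (hv : v ≠ 0) :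
    IsProbDensity volume (gaussianPDFReal m v) where
  measurable := measurable_gaussianPDFReal m v
  nonneg := gaussianPDFReal_nonneg m v
  integral_eq_one := integral_gaussianPDFReal_eq_one m hv

lemma gaussianPDFReal_eq_exp (m : ℝ) {v : ℝ≥0} (hv : v ≠ 0) (x : ℝ) :
    gaussianPDFReal m v x =
      Real.exp (-(Real.log (2 * Real.pi) + Real.log v) / 2 - (x - m) ^ 2 / (2 * v)) := by
  have hv' : (0 : ℝ) < v := NNReal.coe_pos.2 (pos_iff_ne_zero.2 hv)
  rw [gaussianPDFReal, ← Real.log_mul (by positivity) hv'.ne', sub_eq_add_neg (-_ / 2), ← neg_div,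
    Real.exp_add, neg_div 2, Real.exp_neg, ← Real.log_sqrt (by positivity),
    Real.exp_log (by positivity)]

lemma gaussianPDFReal_rpow_mul_rpow {r : ℝ} (m : ℝ) {v : ℝ≥0} (hv : v ≠ 0)
    (hs : 0 < (1 - r) * v + r) (x : ℝ) :
    gaussianPDFReal 0 1 x ^ (1 - r) * gaussianPDFReal m v x ^ r =
      Real.exp (logHellinger r m v) * gaussianPDFReal (r * m / ((1 - r) * v + r))
        (v / ((1 - r) * v + r)).toNNReal x := by
  have hv' : (0 : ℝ) < v := NNReal.coe_pos.2 (pos_iff_ne_zero.2 hv)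
  have hw : 0 < v / ((1 - r) * v + r) := div_pos hv' hs
  rw [gaussianPDFReal_eq_exp 0 one_ne_zero, gaussianPDFReal_eq_exp m hv,
    gaussianPDFReal_eq_exp _ (Real.toNNReal_pos.2 hw).ne', Real.coe_toNNReal _ hw.le,
    Real.log_div hv'.ne' hs.ne', ← Real.exp_mul, ← Real.exp_mul, ← Real.exp_add, ← Real.exp_add,
    logHellinger, NNReal.coe_one, Real.log_one]
  generalize hs_def : (1 - r) * v + r = s at hs
  congr 1
  field_simp
  linear_combination (r * m ^ 2 - x ^ 2 * s) * hs_def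

lemma integrable_hellinger_gaussianPDFReal {r : ℝ} (m : ℝ) {v : ℝ≥0} (hv : v ≠ 0)
    (hs : 0 < (1 - r) * v + r) :
    Integrable fun x ↦ gaussianPDFReal 0 1 x ^ (1 - r) * gaussianPDFReal m v x ^ r := by
  simp only [gaussianPDFReal_rpow_mul_rpow m hv hs]
  exact (integrable_gaussianPDFReal _ _).const_mul _

lemma hellingerIntegral_gaussianPDFReal {r : ℝ} (m : ℝ) {v : ℝ≥0} (hv : v ≠ 0)
    (hs : 0 < (1 - r) * v + r) :
    hellingerIntegral volume (gaussianPDFReal 0 1) (gaussianPDFReal m v) r =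
      Real.exp (logHellinger r m v) := by
  have hw : (v / ((1 - r) * v + r)).toNNReal ≠ 0 :=
    (Real.toNNReal_pos.2 (div_pos (NNReal.coe_pos.2 (pos_iff_ne_zero.2 hv)) hs)).ne'
  simp only [hellingerIntegral, gaussianPDFReal_rpow_mul_rpow m hv hs]
  rw [integral_const_mul, integral_gaussianPDFReal_eq_one _ hw, mul_one]

lemma sub_two_mul_sq_le_log_one_add {u : ℝ} (hu : -(1 / 2) ≤ u) :
    u - 2 * u ^ 2 ≤ Real.log (1 + u) := by
  have hpos : 0 < 1 + u := by linarith
  refine le_trans ?_ (Real.one_sub_inv_le_log_of_pos hpos)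
  rw [← sub_nonneg]
  have hfactor : 1 - (1 + u)⁻¹ - (u - 2 * u ^ 2) = u ^ 2 * (1 + 2 * u) / (1 + u) := by
    field_simp
    ring
  rw [hfactor]
  exact div_nonneg (mul_nonneg (sq_nonneg u) (by linarith)) hpos.le

lemma abs_log_one_add_sub_le {u : ℝ} (hu : -(1 / 2) ≤ u) :
    |Real.log (1 + u) - u| ≤ 2 * u ^ 2 := by
  have hlower := sub_two_mul_sq_le_log_one_add hu
  have hupper := Real.log_le_sub_one_of_pos (show 0 < 1 + u by linarith)
  rw [abs_le]
  constructor <;> nlinarith [sq_nonneg u]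

-- The first-order terms of `(1 - r) * log v` and `log ((1 - r) * v + r)` cancel.
lemma logHellinger_le {r v : ℝ} (m : ℝ) (hv : |v - 1| ≤ 1 / 2) (hrv : |1 - r| * |v - 1| ≤ 1 / 2) :
    logHellinger r m v ≤ ((1 - r) ^ 2 + |1 - r|) * ((v - 1) ^ 2 + m ^ 2) := by
  obtain ⟨x, rfl⟩ : ∃ x, v = 1 + x := ⟨v - 1, by ring⟩
  obtain ⟨k, rfl⟩ : ∃ k, r = 1 - k := ⟨1 - r, by ring⟩
  rw [add_sub_cancel_left] at hv hrv ⊢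
  rw [sub_sub_cancel] at hrv ⊢
  rw [← abs_mul] at hrv
  have hlog : k * (Real.log (1 + x) - x) ≤ |k| * (2 * x ^ 2) := by
    refine (le_abs_self _).trans ?_
    rw [abs_mul]
    gcongr
    exact abs_log_one_add_sub_le (abs_le.1 hv).1
  have hlog' := sub_two_mul_sq_le_log_one_add (abs_le.1 hrv).1
  have hs : 1 / 2 ≤ 1 + k * x := by linarith [(abs_le.1 hrv).1]
  have hmean : -((1 - k) * k * m ^ 2 / (1 + k * x)) ≤ 2 * (k ^ 2 + |k|) * m ^ 2 := by
    rw [← neg_div, div_le_iff₀ (by linarith)]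
    have hcoef : -((1 - k) * k) ≤ k ^ 2 + |k| := by nlinarith [neg_abs_le k]
    calc -((1 - k) * k * m ^ 2) = -((1 - k) * k) * m ^ 2 := by ring
      _ ≤ (k ^ 2 + |k|) * m ^ 2 := by gcongr
      _ = 2 * (k ^ 2 + |k|) * m ^ 2 * (1 / 2) := by ring
      _ ≤ 2 * (k ^ 2 + |k|) * m ^ 2 * (1 + k * x) := by gcongr
  have hden : k * (1 + x) + (1 - k) = 1 + k * x := by ring
  rw [logHellinger, sub_sub_cancel, hden]
  linarith

lemma four_mul_logHellinger_half {v : ℝ} (m : ℝ) (hv : 0 < v) :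
    4 * logHellinger (1 / 2) m v =
      Real.log (1 - ((v - 1) / (v + 1)) ^ 2) - m ^ 2 / (1 + v) := by
  have hden : (1 - 1 / 2) * v + 1 / 2 = (1 + v) / 2 := by ring
  have hsq : 1 - ((v - 1) / (v + 1)) ^ 2 = v / ((1 + v) / 2) ^ 2 := by
    field_simp
    ring
  rw [logHellinger, hden, hsq, Real.log_div hv.ne' (by positivity), Real.log_pow]
  field_simp
  ring

lemma one_sub_div_sq_pos {v : ℝ} (hv : 0 < v) : 0 < 1 - ((v - 1) / (v + 1)) ^ 2 := by
  have : 1 - ((v - 1) / (v + 1)) ^ 2 = 4 * v / (v + 1) ^ 2 := by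
    field_simp
    ring
  rw [this]
  positivity

lemma sq_div_add_sq_div_le_neg_logHellinger_half {v : ℝ} (m : ℝ) (hv : 0 < v) :
    ((v - 1) / (v + 1)) ^ 2 + m ^ 2 / (1 + v) ≤ -(4 * logHellinger (1 / 2) m v) := by
  rw [four_mul_logHellinger_half m hv]
  linarith [Real.log_le_sub_one_of_pos (one_sub_div_sq_pos hv)]

lemma logHellinger_half_nonpos {v : ℝ} (m : ℝ) (hv : 0 < v) : logHellinger (1 / 2) m v ≤ 0 := by
  have hnonneg : 0 ≤ ((v - 1) / (v + 1)) ^ 2 + m ^ 2 / (1 + v) := by positivity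
  linarith [sq_div_add_sq_div_le_neg_logHellinger_half m hv]

lemma one_sub_exp_logHellinger_half_le {v : ℝ} (m : ℝ) (hv : 0 < v) :
    1 - Real.exp (logHellinger (1 / 2) m v) ≤ (v - 1) ^ 2 + m ^ 2 := by
  have hexp : Real.exp (4 * logHellinger (1 / 2) m v) ≤ Real.exp (logHellinger (1 / 2) m v) :=
    Real.exp_le_exp.2 (by linarith [logHellinger_half_nonpos m hv])
  have hexp_eq : Real.exp (4 * logHellinger (1 / 2) m v) =
      (1 - ((v - 1) / (v + 1)) ^ 2) * Real.exp (-(m ^ 2 / (1 + v))) := by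
    rw [four_mul_logHellinger_half m hv, sub_eq_add_neg, Real.exp_add,
      Real.exp_log (one_sub_div_sq_pos hv)]
  have hx : ((v - 1) / (v + 1)) ^ 2 ≤ (v - 1) ^ 2 := by
    rw [div_pow]
    exact div_le_self (sq_nonneg _) (one_le_pow₀ (by linarith))
  have hm : m ^ 2 / (1 + v) ≤ m ^ 2 := div_le_self (sq_nonneg _) (by linarith)
  have hexp_neg := Real.one_sub_le_exp_neg (m ^ 2 / (1 + v))
  have hb : 0 ≤ m ^ 2 / (1 + v) := by positivity
  nlinarith [one_sub_div_sq_pos hv, sq_nonneg ((v - 1) / (v + 1))]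

lemma sq_add_sq_le_neg_logHellinger_half {v : ℝ} (m : ℝ) (hv : 0 < v)
    (h : -logHellinger (1 / 2) m v ≤ 1 / 196) :
    (v - 1) ^ 2 + m ^ 2 ≤ 24 * -logHellinger (1 / 2) m v := by
  have hlower := sq_div_add_sq_div_le_neg_logHellinger_half m hv
  have hratio : (v - 1) / (v + 1) ≤ 1 / 7 := by
    have hm : 0 ≤ m ^ 2 / (1 + v) := by positivity
    exact (abs_le_of_sq_le_sq' (by linarith) (by norm_num)).2
  have hv_le : v ≤ 4 / 3 := by
    rw [div_le_iff₀ (by linarith)] at hratio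
    linarith
  have hx : (v - 1) ^ 2 / 6 ≤ ((v - 1) / (v + 1)) ^ 2 := by
    rw [div_pow]
    gcongr
    nlinarith
  have hm : m ^ 2 / 6 ≤ m ^ 2 / (1 + v) := by
    gcongr
    linarith
  linarith

end GaussianReal

section GaussianPi

variable {ι : Type*} [Fintype ι]

/-- The density of the product of the one-dimensional Gaussians `N(m i, v i)`. -/
noncomputable def piGaussianPDF (m : ι → ℝ) (v : ι → ℝ≥0) (x : ι → ℝ) : ℝ :=
  ∏ i, gaussianPDFReal (m i) (v i) (x i)

/-- The squared Euclidean distance between the parameters `(m, v)` and the parameters `(0, 1)` of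
the standard Gaussian. -/
noncomputable def sqDeviation (m : ι → ℝ) (v : ι → ℝ≥0) : ℝ :=
  ∑ i, (((v i : ℝ) - 1) ^ 2 + m i ^ 2)

lemma one_sub_prod_le_sum_one_sub {κ : Type*} {s : Finset κ} {a : κ → ℝ} (h0 : ∀ i ∈ s, 0 ≤ a i)
    (h1 : ∀ i ∈ s, a i ≤ 1) : 1 - ∏ i ∈ s, a i ≤ ∑ i ∈ s, (1 - a i) := by
  induction s using Finset.cons_induction with
  | empty => simp
  | cons j s hj ih =>
    rw [Finset.forall_mem_cons] at h0 h1
    rw [Finset.prod_cons, Finset.sum_cons]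
    nlinarith [ih h0.2 h1.2, mul_nonneg (sub_nonneg.2 h1.1)
      (sub_nonneg.2 (Finset.prod_le_one h0.2 h1.2))]

variable {m : ι → ℝ} {v : ι → ℝ≥0}

lemma sqDeviation_nonneg (m : ι → ℝ) (v : ι → ℝ≥0) : 0 ≤ sqDeviation m v :=
  Finset.sum_nonneg fun _ _ ↦ by positivity

lemma sq_sub_one_le_sqDeviation (m : ι → ℝ) (v : ι → ℝ≥0) (i : ι) :
    ((v i : ℝ) - 1) ^ 2 ≤ sqDeviation m v :=
  (le_add_of_nonneg_right (sq_nonneg (m i))).trans <|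
    Finset.single_le_sum (f := fun i ↦ ((v i : ℝ) - 1) ^ 2 + m i ^ 2)
      (fun _ _ ↦ by positivity) (Finset.mem_univ i)

lemma isProbDensity_piGaussianPDF (hv : ∀ i, v i ≠ 0) :
    IsProbDensity volume (piGaussianPDF m v) :=
  IsProbDensity.pi fun i ↦ isProbDensity_gaussianPDFReal (m i) (hv i)

lemma isProbDensity_piGaussianPDF_zero_one : IsProbDensity volume (piGaussianPDF (0 : ι → ℝ) 1) :=
  isProbDensity_piGaussianPDF fun _ ↦ one_ne_zero

lemma piGaussianPDF_pos (hv : ∀ i, v i ≠ 0) (x : ι → ℝ) : 0 < piGaussianPDF m v x :=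
  Finset.prod_pos fun i _ ↦ gaussianPDFReal_pos _ _ _ (hv i)

lemma hellingerIntegral_piGaussianPDF {r : ℝ} (hv : ∀ i, v i ≠ 0)
    (hs : ∀ i, 0 < (1 - r) * v i + r) :
    hellingerIntegral volume (piGaussianPDF 0 1) (piGaussianPDF m v) r =
      Real.exp (∑ i, logHellinger r (m i) (v i)) := by
  rw [Real.exp_sum]
  refine (hellingerIntegral_pi (fun _ ↦ gaussianPDFReal_nonneg _ _)
    (fun _ ↦ gaussianPDFReal_nonneg _ _) r).trans (Finset.prod_congr rfl fun i _ ↦ ?_)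
  exact hellingerIntegral_gaussianPDFReal (m i) (hv i) (hs i)

lemma integrable_hellinger_piGaussianPDF {r : ℝ} (hv : ∀ i, v i ≠ 0)
    (hs : ∀ i, 0 < (1 - r) * v i + r) :
    Integrable fun x ↦ piGaussianPDF 0 1 x ^ (1 - r) * piGaussianPDF m v x ^ r :=
  integrable_hellinger_pi (fun _ ↦ gaussianPDFReal_nonneg _ _)
    (fun _ ↦ gaussianPDFReal_nonneg _ _)
    fun i ↦ integrable_hellinger_gaussianPDFReal (m i) (hv i) (hs i)

lemma hellingerIntegral_half_piGaussianPDF (hv : ∀ i, v i ≠ 0) :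
    hellingerIntegral volume (piGaussianPDF 0 1) (piGaussianPDF m v) (1 / 2) =
      Real.exp (∑ i, logHellinger (1 / 2) (m i) (v i)) :=
  hellingerIntegral_piGaussianPDF hv fun i ↦ by positivity

theorem tvDist_piGaussianPDF_le (hv : ∀ i, v i ≠ 0) :
    tvDist (ofDensity volume (piGaussianPDF 0 1)) (ofDensity volume (piGaussianPDF m v)) ≤
      2 * √(sqDeviation m v) := by
  have hv_pos (i : ι) : (0 : ℝ) < v i := NNReal.coe_pos.2 (pos_iff_ne_zero.2 (hv i))
  have hone : 1 - hellingerIntegral volume (piGaussianPDF 0 1) (piGaussianPDF m v) (1 / 2) ≤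
      sqDeviation m v := by
    rw [hellingerIntegral_half_piGaussianPDF hv, Real.exp_sum]
    calc _ ≤ ∑ i, (1 - Real.exp (logHellinger (1 / 2) (m i) (v i))) :=
          one_sub_prod_le_sum_one_sub (fun _ _ ↦ (Real.exp_pos _).le)
            fun i _ ↦ Real.exp_le_one_iff.2 (logHellinger_half_nonpos _ (hv_pos i))
      _ ≤ sqDeviation m v :=
          Finset.sum_le_sum fun i _ ↦ one_sub_exp_logHellinger_half_le _ (hv_pos i)
  have hsq := isProbDensity_piGaussianPDF_zero_one.tvDist_sq_le_two_mul_one_sub_hellingerIntegral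
    (isProbDensity_piGaussianPDF (m := m) hv)
  refine (abs_le_of_sq_le_sq' (b := 2 * √(sqDeviation m v)) ?_ (by positivity)).2
  rw [mul_pow, Real.sq_sqrt (sqDeviation_nonneg m v)]
  linarith [sqDeviation_nonneg m v]

lemma sqDeviation_le_of_sum_neg_logHellinger_le (hv : ∀ i, v i ≠ 0)
    (h : ∑ i, -logHellinger (1 / 2) (m i) (v i) ≤ 1 / 196) :
    sqDeviation m v ≤ 24 * ∑ i, -logHellinger (1 / 2) (m i) (v i) := by
  have hv_pos (i : ι) : (0 : ℝ) < v i := NNReal.coe_pos.2 (pos_iff_ne_zero.2 (hv i))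
  rw [sqDeviation, Finset.mul_sum]
  refine Finset.sum_le_sum fun i _ ↦ sq_add_sq_le_neg_logHellinger_half _ (hv_pos i) ?_
  exact (Finset.single_le_sum (f := fun i ↦ -logHellinger (1 / 2) (m i) (v i))
    (fun j _ ↦ neg_nonneg.2 (logHellinger_half_nonpos _ (hv_pos j))) (Finset.mem_univ i)).trans h

theorem sqDeviation_le_of_tvDist_le (hv : ∀ i, v i ≠ 0)
    (h : tvDist (ofDensity volume (piGaussianPDF 0 1)) (ofDensity volume (piGaussianPDF m v)) ≤
      1 / 300) :
    sqDeviation m v ≤ 1 / 10 ∧ sqDeviation m v ≤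
      48 * (1 - hellingerIntegral volume (piGaussianPDF 0 1) (piGaussianPDF m v) (1 / 2)) := by
  have haffinity := (isProbDensity_piGaussianPDF_zero_one.one_sub_hellingerIntegral_le_tvDist
    (isProbDensity_piGaussianPDF hv)).trans h
  rw [hellingerIntegral_half_piGaussianPDF hv] at haffinity ⊢
  have hL_eq : ∑ i, logHellinger (1 / 2) (m i) (v i) =
      -∑ i, -logHellinger (1 / 2) (m i) (v i) := by
    rw [Finset.sum_neg_distrib, neg_neg]
  rw [hL_eq] at haffinity ⊢
  have hN := sqDeviation_le_of_sum_neg_logHellinger_le (m := m) hv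
  generalize ∑ i, -logHellinger (1 / 2) (m i) (v i) = L at haffinity hN ⊢
  have hmul : Real.exp (-L) * Real.exp L = 1 := by
    rw [← Real.exp_add, neg_add_cancel, Real.exp_zero]
  have hexp := Real.add_one_le_exp L
  have hL : L ≤ 1 / 299 := by nlinarith
  have hN := hN (hL.trans (by norm_num))
  refine ⟨by linarith, ?_⟩
  have hL0 : 0 ≤ L := by linarith [sqDeviation_nonneg m v]
  nlinarith [Real.exp_pos (-L)]

lemma integrable_hellinger_and_le_of_mul_sqrt_le {r : ℝ} (hv : ∀ i, v i ≠ 0)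
    (hN : sqDeviation m v ≤ 1 / 36) (hr : |r| * √(sqDeviation m v) ≤ 1 / 3) :
    (Integrable fun x ↦ piGaussianPDF 0 1 x ^ (1 - r) * piGaussianPDF m v x ^ r) ∧
      hellingerIntegral volume (piGaussianPDF 0 1) (piGaussianPDF m v) r ≤ 3 / 2 := by
  set D := √(sqDeviation m v)
  have hD0 : 0 ≤ D := Real.sqrt_nonneg _
  have hD_sq : D ^ 2 = sqDeviation m v := Real.sq_sqrt (sqDeviation_nonneg m v)
  have hD6 : D ≤ 1 / 6 := Real.sqrt_le_iff.2 ⟨by norm_num, hN.trans (by norm_num)⟩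
  have hk : |1 - r| * D ≤ 1 / 3 + D := by
    have htri : |1 - r| ≤ 1 + |r| := by simpa using abs_sub 1 r
    nlinarith
  have hvD (i : ι) : |(v i : ℝ) - 1| ≤ D := Real.abs_le_sqrt (sq_sub_one_le_sqDeviation m v i)
  have hkv (i : ι) : |1 - r| * |(v i : ℝ) - 1| ≤ 1 / 2 :=
    (mul_le_mul_of_nonneg_left (hvD i) (abs_nonneg _)).trans (hk.trans (by linarith))
  have hs (i : ι) : 0 < (1 - r) * v i + r := by
    have := neg_abs_le ((1 - r) * ((v i : ℝ) - 1))
    rw [abs_mul] at this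
    linarith [hkv i]
  refine ⟨integrable_hellinger_piGaussianPDF hv hs, ?_⟩
  have hsum : ∑ i, logHellinger r (m i) (v i) ≤ 1 / 3 := by
    calc ∑ i, logHellinger r (m i) (v i)
        ≤ ∑ i, ((1 - r) ^ 2 + |1 - r|) * (((v i : ℝ) - 1) ^ 2 + m i ^ 2) :=
          Finset.sum_le_sum fun i _ ↦ logHellinger_le _ ((hvD i).trans (by linarith)) (hkv i)
      _ = (|1 - r| * D) * (|1 - r| * D + D) := by
          rw [← Finset.mul_sum, ← sqDeviation, ← hD_sq, ← sq_abs (1 - r)]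
          ring
      _ ≤ (1 / 3 + 1 / 6) * (1 / 3 + 1 / 6 + 1 / 6) := by
          gcongr <;> linarith
      _ = 1 / 3 := by norm_num
  rw [hellingerIntegral_piGaussianPDF hv hs]
  have hmul : Real.exp (-(1 / 3)) * Real.exp (1 / 3) = 1 := by
    rw [← Real.exp_add, neg_add_cancel, Real.exp_zero]
  have hexp := Real.exp_le_exp.2 hsum
  nlinarith [Real.add_one_le_exp (-(1 / 3 : ℝ)), Real.exp_pos (1 / 3)]

theorem sqrt_sqDeviation_le_of_tvDist_le (hv : ∀ i, v i ≠ 0)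
    (h : tvDist (ofDensity volume (piGaussianPDF 0 1)) (ofDensity volume (piGaussianPDF m v)) ≤
      1 / 300) :
    √(sqDeviation m v) ≤
      50000 * tvDist (ofDensity volume (piGaussianPDF 0 1))
        (ofDensity volume (piGaussianPDF m v)) := by
  have hp := isProbDensity_piGaussianPDF_zero_one (ι := ι)
  have hq := isProbDensity_piGaussianPDF (m := m) hv
  have haffinity := (sqDeviation_le_of_tvDist_le hv h).2
  have htv := hp.one_sub_hellingerIntegral_le_tvDist hq
  set τ := tvDist (ofDensity volume (piGaussianPDF 0 1)) (ofDensity volume (piGaussianPDF m v))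
  set D := √(sqDeviation m v) with hD
  have hD_sq : D ^ 2 = sqDeviation m v := Real.sq_sqrt (sqDeviation_nonneg m v)
  rcases (Real.sqrt_nonneg (sqDeviation m v)).eq_or_lt with hzero | hpos
  · rw [hD, ← hzero]
    linarith [tvDist_nonneg (ofDensity volume (piGaussianPDF 0 1))
      (ofDensity volume (piGaussianPDF m v))]
  rw [← hD] at hpos
  rcases le_total (1 / 6) D with hlarge | hsmall
  · nlinarith
  have hN : sqDeviation m v ≤ 1 / 36 := by nlinarith
  have hrD : |1 / (3 * D)| * √(sqDeviation m v) ≤ 1 / 3 := by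
    rw [abs_of_pos (by positivity), ← hD]
    exact le_of_eq (by field_simp)
  obtain ⟨hint, hH⟩ := integrable_hellinger_and_le_of_mul_sqrt_le hv hN hrD
  obtain ⟨hint', hH'⟩ := integrable_hellinger_and_le_of_mul_sqrt_le hv hN
    (r := -(1 / (3 * D))) (by rwa [abs_neg])
  have hmoment := hp.one_sub_hellingerIntegral_div_le_tvDist_add hq
    (piGaussianPDF_pos fun _ ↦ one_ne_zero) (piGaussianPDF_pos hv)
    (show 2 ≤ 1 / (3 * D) by rw [le_div_iff₀ (by positivity)]; linarith)
    (show 0 < 500 * D by positivity) hint hint'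
  have hlower : D / 24000 ≤ (1 - hellingerIntegral volume (piGaussianPDF 0 1)
      (piGaussianPDF m v) (1 / 2)) / (500 * D) := by
    rw [le_div_iff₀ (by positivity)]
    linarith
  have hcoef : 8 / ((1 / (3 * D)) ^ 4 * (500 * D) ^ 3) = 648 / 125000000 * D := by
    field_simp
    norm_num
  rw [hcoef] at hmoment
  nlinarith

end GaussianPi

section AffineInvariance

lemma map_withDensity_measurableEquiv {X Y : Type*} [MeasurableSpace X] [MeasurableSpace Y]
    (e : X ≃ᵐ Y) (μ : Measure X) (f : X → ENNReal) :
    (μ.withDensity f).map e = (μ.map e).withDensity (f ∘ e.symm) := by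
  ext E hE
  rw [e.map_apply, withDensity_apply _ (e.measurable hE), withDensity_apply _ hE,
    e.restrict_map, lintegral_map_equiv]
  simp only [Function.comp_apply, e.symm_apply_apply]

variable {ι : Type*} [Fintype ι] [DecidableEq ι] {T : Matrix ι ι ℝ}

/-- The invertible affine map `x ↦ a + T x` of `ℝ^ι` as a measurable equivalence. -/
noncomputable def affineMeasurableEquiv (a : ι → ℝ) (hT : IsUnit T.det) :
    (ι → ℝ) ≃ᵐ (ι → ℝ) where
  toFun x := a + T *ᵥ x
  invFun y := T⁻¹ *ᵥ (y - a)
  left_inv x := by simp [nonsing_inv_mul T hT]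
  right_inv y := by simp [mul_nonsing_inv T hT]
  measurable_toFun := by
    have : Continuous fun x : ι → ℝ ↦ a + T *ᵥ x := by fun_prop
    exact this.measurable
  measurable_invFun := by
    have : Continuous fun y : ι → ℝ ↦ T⁻¹ *ᵥ (y - a) := by fun_prop
    exact this.measurable

lemma affineMeasurableEquiv_apply (a : ι → ℝ) (hT : IsUnit T.det) (x : ι → ℝ) :
    affineMeasurableEquiv a hT x = a + T *ᵥ x := rfl

lemma map_affineMeasurableEquiv_volume (a : ι → ℝ) (hT : IsUnit T.det) :
    (volume : Measure (ι → ℝ)).map (affineMeasurableEquiv a hT) =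
      ENNReal.ofReal |T.det⁻¹| • volume := by
  have hcomp : ⇑(affineMeasurableEquiv a hT) = (a + ·) ∘ toLin' T := rfl
  rw [hcomp, ← Measure.map_map (measurable_const_add a)
      (LinearMap.continuous_of_finiteDimensional _).measurable,
    Real.map_matrix_volume_pi_eq_smul_volume_pi hT.ne_zero, Measure.map_smul,
    map_add_left_eq_self]

lemma map_affineMeasurableEquiv_ofDensity (a : ι → ℝ) (hT : IsUnit T.det) {p q : (ι → ℝ) → ℝ}
    (h : ∀ x, p x = |T.det| * q (a + T *ᵥ x)) :
    (ofDensity volume p).map (affineMeasurableEquiv a hT) = ofDensity volume q := by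
  have hpull : (fun x ↦ ENNReal.ofReal (p x)) ∘ (affineMeasurableEquiv a hT).symm =
      ENNReal.ofReal |T.det| • fun y ↦ ENNReal.ofReal (q y) := by
    funext y
    rw [Function.comp_apply, h, ← affineMeasurableEquiv_apply a hT,
      MeasurableEquiv.apply_symm_apply, ENNReal.ofReal_mul (abs_nonneg _), Pi.smul_apply,
      smul_eq_mul]
  rw [ofDensity, map_withDensity_measurableEquiv, map_affineMeasurableEquiv_volume, hpull,
    withDensity_smul_measure, withDensity_smul' _ _ ENNReal.ofReal_ne_top, smul_smul,
    ← ENNReal.ofReal_mul (abs_nonneg _), ← abs_mul, inv_mul_cancel₀ hT.ne_zero, abs_one,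
    ENNReal.ofReal_one, one_smul, ofDensity]

end AffineInvariance

section GaussianMeasure

variable {d : ℕ}

/-- The Gaussian measure `N(m, S)` on `ℝ^d`. -/
noncomputable def gaussianMeasure (m : Fin d → ℝ) (S : Matrix (Fin d) (Fin d) ℝ) :
    Measure (Fin d → ℝ) :=
  ofDensity volume (gaussianPdf d m S)

lemma mem_Gd_iff {g : Measure (Fin d → ℝ)} :
    g ∈ Gd d ↔ ∃ m S, S.PosDef ∧ g = gaussianMeasure m S := Iff.rfl

variable {T S : Matrix (Fin d) (Fin d) ℝ}

lemma gaussianPdf_eq_abs_det_mul (a m : Fin d → ℝ) (hT : IsUnit T.det) (x : Fin d → ℝ) :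
    gaussianPdf d m S x =
      |T.det| * gaussianPdf d (a + T *ᵥ m) (T * S * Tᵀ) (a + T *ᵥ x) := by
  have hquad : (T *ᵥ (x - m)) ⬝ᵥ ((T * S * Tᵀ)⁻¹ *ᵥ (T *ᵥ (x - m))) =
      (x - m) ⬝ᵥ (S⁻¹ *ᵥ (x - m)) := by
    rw [mulVec_mulVec, ← vecMul_transpose, ← dotProduct_mulVec, mulVec_mulVec, Matrix.mul_inv_rev,
      Matrix.mul_inv_rev, mul_assoc, mul_assoc, nonsing_inv_mul T hT, mul_one,
      mul_nonsing_inv_cancel_left _ _ (by rwa [det_transpose])]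
  have hsqrt : √((2 * Real.pi) ^ d * (T * S * Tᵀ).det) =
      |T.det| * √((2 * Real.pi) ^ d * S.det) := by
    rw [← Real.sqrt_sq_eq_abs, ← Real.sqrt_mul (sq_nonneg _), det_mul, det_mul, det_transpose]
    ring_nf
  have habs : |T.det| ≠ 0 := abs_ne_zero.2 hT.ne_zero
  rw [gaussianPdf, gaussianPdf, add_sub_add_left_eq_sub, ← mulVec_sub, hquad, hsqrt, mul_inv,
    ← mul_assoc, mul_inv_cancel_left₀ habs]

lemma map_affineMeasurableEquiv_gaussianMeasure (a m : Fin d → ℝ) (hT : IsUnit T.det) :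
    (gaussianMeasure m S).map (affineMeasurableEquiv a hT) =
      gaussianMeasure (a + T *ᵥ m) (T * S * Tᵀ) :=
  map_affineMeasurableEquiv_ofDensity a hT (gaussianPdf_eq_abs_det_mul a m hT)

lemma tvDist_gaussianMeasure_affine (a m m' : Fin d → ℝ) (hT : IsUnit T.det)
    (S S' : Matrix (Fin d) (Fin d) ℝ) :
    tvDist (gaussianMeasure (a + T *ᵥ m) (T * S * Tᵀ))
        (gaussianMeasure (a + T *ᵥ m') (T * S' * Tᵀ)) =
      tvDist (gaussianMeasure m S) (gaussianMeasure m' S') := by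
  rw [← map_affineMeasurableEquiv_gaussianMeasure a m hT,
    ← map_affineMeasurableEquiv_gaussianMeasure a m' hT, tvDist_map_measurableEquiv]

lemma gaussianPdf_diagonal (m : Fin d → ℝ) {v : Fin d → ℝ≥0} (hv : ∀ i, v i ≠ 0) :
    gaussianPdf d m (diagonal fun i ↦ (v i : ℝ)) = piGaussianPDF m v := by
  funext x
  have hinv : (diagonal fun i ↦ (v i : ℝ))⁻¹ = diagonal fun i ↦ (v i : ℝ)⁻¹ := by
    refine inv_eq_right_inv ?_
    rw [diagonal_mul_diagonal, ← diagonal_one]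
    exact congrArg diagonal (funext fun i ↦ mul_inv_cancel₀ (NNReal.coe_ne_zero.2 (hv i)))
  have hquad : -(1 / 2) * ((x - m) ⬝ᵥ ((diagonal fun i ↦ (v i : ℝ)⁻¹) *ᵥ (x - m))) =
      ∑ i, -(x i - m i) ^ 2 / (2 * v i) := by
    simp only [dotProduct, mulVec_diagonal, Finset.mul_sum, Pi.sub_apply]
    refine Finset.sum_congr rfl fun i _ ↦ ?_
    ring
  have hsqrt : √((2 * Real.pi) ^ d * ∏ i, (v i : ℝ)) = ∏ i, √(2 * Real.pi * v i) := by
    rw [← Real.sqrt_prod _ fun i _ ↦ by positivity, Finset.prod_mul_distrib, Finset.prod_const,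
      Finset.card_univ, Fintype.card_fin]
  simp only [gaussianPdf, piGaussianPDF, gaussianPDFReal]
  rw [hinv, det_diagonal, hquad, hsqrt, Real.exp_sum, ← Finset.prod_inv_distrib,
    ← Finset.prod_mul_distrib]

lemma gaussianMeasure_diagonal (m : Fin d → ℝ) {v : Fin d → ℝ≥0} (hv : ∀ i, v i ≠ 0) :
    gaussianMeasure m (diagonal fun i ↦ (v i : ℝ)) = ofDensity volume (piGaussianPDF m v) := by
  rw [gaussianMeasure, gaussianPdf_diagonal m hv]

lemma gaussianMeasure_zero_one :
    gaussianMeasure (0 : Fin d → ℝ) 1 = ofDensity volume (piGaussianPDF 0 1) := by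
  have hone : (1 : Matrix (Fin d) (Fin d) ℝ) =
      diagonal fun i ↦ (((1 : Fin d → ℝ≥0) i : ℝ≥0) : ℝ) := by
    simp only [Pi.one_apply, NNReal.coe_one, diagonal_one]
  exact hone ▸ gaussianMeasure_diagonal 0 fun _ ↦ one_ne_zero

end GaussianMeasure

section ParameterVector

variable {ι : Type*}

/-- The mean `m` and the matrix `A` as one vector of a Euclidean space; the Euclidean norm of `A`
is its Frobenius norm. -/
def parameterVector (m : ι → ℝ) (A : Matrix ι ι ℝ) : EuclideanSpace ℝ (ι ⊕ ι × ι) :=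
  WithLp.toLp 2 (Sum.elim m fun p ↦ A p.1 p.2)

lemma parameterVector_sub (m m' : ι → ℝ) (A A' : Matrix ι ι ℝ) :
    parameterVector m A - parameterVector m' A' = parameterVector (m - m') (A - A') := by
  ext i
  rcases i with i | p <;> rfl

variable [Fintype ι]

lemma trace_mul_transpose_self (A : Matrix ι ι ℝ) : (A * Aᵀ).trace = ∑ i, ∑ j, A i j ^ 2 := by
  simp only [trace, diag_apply, mul_apply, transpose_apply, sq]

lemma norm_parameterVector_sq (m : ι → ℝ) (A : Matrix ι ι ℝ) :
    ‖parameterVector m A‖ ^ 2 = m ⬝ᵥ m + (A * Aᵀ).trace := by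
  rw [EuclideanSpace.norm_sq_eq, Fintype.sum_sum_type, Fintype.sum_prod_type,
    trace_mul_transpose_self]
  simp only [parameterVector, Sum.elim_inl, Sum.elim_inr, Real.norm_eq_abs, dotProduct, sq,
    abs_mul_abs_self]

lemma trace_mul_mul_transpose_le {W : Matrix ι ι ℝ} {c : ℝ}
    (hW : ∀ x, (W *ᵥ x) ⬝ᵥ (W *ᵥ x) ≤ c * (x ⬝ᵥ x)) (A : Matrix ι ι ℝ) :
    ((W * A) * (W * A)ᵀ).trace ≤ c * (A * Aᵀ).trace := by
  have hcol (B : Matrix ι ι ℝ) : (B * Bᵀ).trace = ∑ j, B.col j ⬝ᵥ B.col j := by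
    rw [trace_mul_transpose_self, Finset.sum_comm]
    simp only [dotProduct, col_apply, sq]
  rw [hcol, hcol, Finset.mul_sum]
  exact Finset.sum_le_sum fun j _ ↦ hW (A.col j)

lemma norm_parameterVector_conj_le {W : Matrix ι ι ℝ} {c : ℝ} (hc : 1 ≤ c)
    (hW : ∀ x, (W *ᵥ x) ⬝ᵥ (W *ᵥ x) ≤ c * (x ⬝ᵥ x)) (m : ι → ℝ) (A : Matrix ι ι ℝ) :
    ‖parameterVector (W *ᵥ m) (W * A * Wᵀ)‖ ≤ c * ‖parameterVector m A‖ := by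
  have hc0 : 0 ≤ c := zero_le_one.trans hc
  have htrace : ((W * A * Wᵀ) * (W * A * Wᵀ)ᵀ).trace ≤ c ^ 2 * (A * Aᵀ).trace := by
    calc ((W * A * Wᵀ) * (W * A * Wᵀ)ᵀ).trace
        = ((W * (W * A)ᵀ) * (W * (W * A)ᵀ)ᵀ).trace := by
          rw [trace_mul_comm, transpose_mul (W * A), transpose_transpose,
            transpose_mul W (W * A)ᵀ, transpose_transpose]
      _ ≤ c * ((W * A) * (W * A)ᵀ).trace := by
          rw [trace_mul_comm (W * A)]
          simpa only [transpose_transpose] using trace_mul_mul_transpose_le hW (W * A)ᵀ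
      _ ≤ c * (c * (A * Aᵀ).trace) :=
          mul_le_mul_of_nonneg_left (trace_mul_mul_transpose_le hW A) hc0
      _ = c ^ 2 * (A * Aᵀ).trace := by ring
  have hmean : (W *ᵥ m) ⬝ᵥ (W *ᵥ m) ≤ c ^ 2 * (m ⬝ᵥ m) :=
    (hW m).trans <| mul_le_mul_of_nonneg_right (le_self_pow₀ hc two_ne_zero)
      (Finset.sum_nonneg fun i _ ↦ mul_self_nonneg (m i))
  refine (abs_le_of_sq_le_sq' ?_ (by positivity)).2
  rw [mul_pow, norm_parameterVector_sq, norm_parameterVector_sq, mul_add]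
  exact add_le_add hmean htrace

lemma dotProduct_mulVec_sq_le (A : Matrix ι ι ℝ) (x : ι → ℝ) :
    (x ⬝ᵥ (A *ᵥ x)) ^ 2 ≤ (A * Aᵀ).trace * (x ⬝ᵥ x) ^ 2 := by
  have hquad : x ⬝ᵥ (A *ᵥ x) = ∑ p : ι × ι, A p.1 p.2 * (x p.1 * x p.2) := by
    simp only [dotProduct, mulVec, Finset.mul_sum, Fintype.sum_prod_type]
    exact Finset.sum_congr rfl fun i _ ↦ Finset.sum_congr rfl fun j _ ↦ by ring
  have hnorm : (x ⬝ᵥ x) ^ 2 = ∑ p : ι × ι, (x p.1 * x p.2) ^ 2 := by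
    simp only [dotProduct, Fintype.sum_prod_type, sq, Finset.sum_mul_sum]
    exact Finset.sum_congr rfl fun i _ ↦ Finset.sum_congr rfl fun j _ ↦ by ring
  rw [hquad, hnorm, trace_mul_transpose_self, ← Fintype.sum_prod_type']
  exact Finset.sum_mul_sq_le_sq_mul_sq _ _ _

variable [DecidableEq ι]

lemma norm_parameterVector_orthogonal_conj {U : Matrix ι ι ℝ} (hU : Uᵀ * U = 1) (m : ι → ℝ)
    (A : Matrix ι ι ℝ) :
    ‖parameterVector (U *ᵥ m) (U * A * Uᵀ)‖ = ‖parameterVector m A‖ := by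
  have hiso {V : Matrix ι ι ℝ} (hV : Vᵀ * V = 1) (x : ι → ℝ) :
      (V *ᵥ x) ⬝ᵥ (V *ᵥ x) ≤ 1 * (x ⬝ᵥ x) := by
    rw [dotProduct_mulVec, vecMul_mulVec, hV, vecMul_one, one_mul]
  have hU' : Uᵀᵀ * Uᵀ = 1 := by rw [transpose_transpose, mul_eq_one_comm.1 hU]
  refine le_antisymm ?_ ?_
  · simpa only [one_mul] using norm_parameterVector_conj_le le_rfl (hiso hU) m A
  · have := norm_parameterVector_conj_le le_rfl (hiso hU') (U *ᵥ m) (U * A * Uᵀ)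
    rwa [one_mul, mulVec_mulVec, hU, one_mulVec, transpose_transpose, mul_assoc, mul_assoc, hU,
      mul_one, ← mul_assoc, hU, one_mul] at this

lemma norm_parameterVector_diagonal_sub_one (m : ι → ℝ) (v : ι → ℝ≥0) :
    ‖parameterVector m (diagonal (fun i ↦ (v i : ℝ)) - 1)‖ = √(sqDeviation m v) := by
  have hdiag : diagonal (fun i ↦ (v i : ℝ)) - 1 = diagonal fun i ↦ (v i : ℝ) - 1 := by
    rw [← diagonal_one, diagonal_sub]
  rw [eq_comm, Real.sqrt_eq_iff_eq_sq (sqDeviation_nonneg m v) (norm_nonneg _),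
    norm_parameterVector_sq, hdiag, diagonal_transpose, diagonal_mul_diagonal, trace_diagonal,
    sqDeviation, Finset.sum_add_distrib, add_comm]
  simp only [dotProduct, sq]

end ParameterVector

section PosDef

variable {ι : Type*} [Fintype ι] [DecidableEq ι] {S : Matrix ι ι ℝ}

open scoped MatrixOrder in
lemma exists_symm_mul_self_eq_of_posDef (hS : S.PosDef) :
    ∃ R : Matrix ι ι ℝ, IsUnit R.det ∧ Rᵀ = R ∧ R * R = S := by
  have hsq : CFC.sqrt S * CFC.sqrt S = S := CFC.sqrt_mul_sqrt_self S hS.posSemidef.nonneg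
  refine ⟨CFC.sqrt S, ?_, ?_, hsq⟩
  · have hdet := hS.det_pos.ne'
    rw [← hsq, det_mul] at hdet
    exact isUnit_iff_ne_zero.2 (left_ne_zero_of_mul hdet)
  · rw [← conjTranspose_eq_transpose_of_trivial]
    exact (CFC.sqrt_nonneg S).posSemidef.isHermitian

lemma exists_orthogonal_conj_diagonal_of_posDef (hS : S.PosDef) :
    ∃ (U : Matrix ι ι ℝ) (v : ι → ℝ≥0), Uᵀ * U = 1 ∧ (∀ i, v i ≠ 0) ∧
      S = U * diagonal (fun i ↦ (v i : ℝ)) * Uᵀ := by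
  refine ⟨hS.1.eigenvectorUnitary, fun i ↦ ⟨hS.1.eigenvalues i, (hS.eigenvalues_pos i).le⟩, ?_,
    fun i h ↦ (hS.eigenvalues_pos i).ne' (congrArg NNReal.toReal h), ?_⟩
  · have := Unitary.coe_star_mul_self hS.1.eigenvectorUnitary
    rwa [star_eq_conjTranspose, conjTranspose_eq_transpose_of_trivial] at this
  · have := hS.1.spectral_theorem
    rwa [Unitary.conjStarAlgAut_apply, star_eq_conjTranspose,
      conjTranspose_eq_transpose_of_trivial] at this

lemma posDef_mul_mul_transpose_of_isUnit_det {W : Matrix ι ι ℝ} (hW : IsUnit W.det)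
    (hS : S.PosDef) : (W * S * Wᵀ).PosDef := by
  rw [← conjTranspose_eq_transpose_of_trivial, ← star_eq_conjTranspose]
  exact (IsUnit.posDef_star_right_conjugate_iff ((isUnit_iff_isUnit_det W).2 hW)).2 hS

lemma dotProduct_self_le_two_mul_dotProduct_mulVec {m : ι → ℝ}
    (h : ‖parameterVector m (S - 1)‖ ≤ 1 / 2) (x : ι → ℝ) :
    x ⬝ᵥ x ≤ 2 * (x ⬝ᵥ (S *ᵥ x)) := by
  have hm : 0 ≤ m ⬝ᵥ m := Finset.sum_nonneg fun i _ ↦ mul_self_nonneg (m i)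
  have hx : 0 ≤ x ⬝ᵥ x := Finset.sum_nonneg fun i _ ↦ mul_self_nonneg (x i)
  have hnorm : ((S - 1) * (S - 1)ᵀ).trace ≤ (1 / 2) ^ 2 := by
    have := pow_le_pow_left₀ (norm_nonneg _) h 2
    rw [norm_parameterVector_sq] at this
    linarith
  have hsq : (x ⬝ᵥ ((S - 1) *ᵥ x)) ^ 2 ≤ (1 / 2 * (x ⬝ᵥ x)) ^ 2 := by
    rw [mul_pow]
    exact (dotProduct_mulVec_sq_le _ x).trans (mul_le_mul_of_nonneg_right hnorm (sq_nonneg _))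
  have := (abs_le_of_sq_le_sq' hsq (by positivity)).1
  rw [sub_mulVec, one_mulVec, dotProduct_sub] at this
  linarith

lemma inv_mulVec_dotProduct_self_le {R : Matrix ι ι ℝ} {c : ℝ} (hR : IsUnit R.det)
    (hsymm : Rᵀ = R) (h : ∀ x, x ⬝ᵥ x ≤ c * (x ⬝ᵥ ((R * R) *ᵥ x))) (x : ι → ℝ) :
    (R⁻¹ *ᵥ x) ⬝ᵥ (R⁻¹ *ᵥ x) ≤ c * (x ⬝ᵥ x) := by
  refine (h (R⁻¹ *ᵥ x)).trans_eq ?_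
  have hx : R *ᵥ (R⁻¹ *ᵥ x) = x := by rw [mulVec_mulVec, mul_nonsing_inv R hR, one_mulVec]
  rw [← mulVec_mulVec, hx, dotProduct_mulVec, ← mulVec_transpose, hsymm, hx]

end PosDef

section LocalCoordinates

variable {d : ℕ}

lemma exists_piGaussianPDF_tvDist_eq_and_norm_parameterVector_eq (m : Fin d → ℝ)
    {S : Matrix (Fin d) (Fin d) ℝ} (hS : S.PosDef) :
    ∃ (m' : Fin d → ℝ) (v : Fin d → ℝ≥0), (∀ i, v i ≠ 0) ∧
      tvDist (gaussianMeasure 0 1) (gaussianMeasure m S) =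
        tvDist (ofDensity volume (piGaussianPDF 0 1)) (ofDensity volume (piGaussianPDF m' v)) ∧
      ‖parameterVector m (S - 1)‖ = √(sqDeviation m' v) := by
  obtain ⟨U, v, hU, hv, rfl⟩ := exists_orthogonal_conj_diagonal_of_posDef hS
  have hU' : U * Uᵀ = 1 := mul_eq_one_comm.1 hU
  have hm : U *ᵥ (Uᵀ *ᵥ m) = m := by rw [mulVec_mulVec, hU', one_mulVec]
  refine ⟨Uᵀ *ᵥ m, v, hv, ?_, ?_⟩
  · rw [gaussianMeasure_zero_one]
    have := tvDist_gaussianMeasure_affine 0 0 (Uᵀ *ᵥ m) (isUnit_det_of_left_inverse hU) 1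
      (diagonal fun i ↦ (v i : ℝ))
    rwa [zero_add, zero_add, mulVec_zero, mul_one, hU', hm, gaussianMeasure_diagonal _ hv,
      gaussianMeasure_zero_one] at this
  · rw [← norm_parameterVector_diagonal_sub_one,
      ← norm_parameterVector_orthogonal_conj hU (Uᵀ *ᵥ m), hm, mul_sub, sub_mul, mul_one, hU']

lemma tvDist_zero_one_gaussianMeasure_le (m : Fin d → ℝ) {S : Matrix (Fin d) (Fin d) ℝ}
    (hS : S.PosDef) :
    tvDist (gaussianMeasure 0 1) (gaussianMeasure m S) ≤ 2 * ‖parameterVector m (S - 1)‖ := by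
  obtain ⟨m', v, hv, htv, hnorm⟩ :=
    exists_piGaussianPDF_tvDist_eq_and_norm_parameterVector_eq m hS
  rw [htv, hnorm]
  exact tvDist_piGaussianPDF_le hv

lemma norm_parameterVector_le_of_tvDist_le {m : Fin d → ℝ} {S : Matrix (Fin d) (Fin d) ℝ}
    (hS : S.PosDef) (h : tvDist (gaussianMeasure 0 1) (gaussianMeasure m S) ≤ 1 / 300) :
    ‖parameterVector m (S - 1)‖ ≤ 1 / 2 ∧ ‖parameterVector m (S - 1)‖ ≤
      50000 * tvDist (gaussianMeasure 0 1) (gaussianMeasure m S) := by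
  obtain ⟨m', v, hv, htv, hnorm⟩ :=
    exists_piGaussianPDF_tvDist_eq_and_norm_parameterVector_eq m hS
  rw [htv] at h ⊢
  rw [hnorm]
  refine ⟨Real.sqrt_le_iff.2 ⟨by norm_num, ?_⟩, sqrt_sqDeviation_le_of_tvDist_le hv h⟩
  exact (sqDeviation_le_of_tvDist_le hv h).1.trans (by norm_num)

theorem tvDist_gaussianMeasure_le_norm_parameterVector_sub {m₁ m₂ : Fin d → ℝ}
    {S₁ S₂ : Matrix (Fin d) (Fin d) ℝ} (hS₁ : S₁.PosDef) (hS₂ : S₂.PosDef)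
    (h : ‖parameterVector m₁ (S₁ - 1)‖ ≤ 1 / 2) :
    tvDist (gaussianMeasure m₁ S₁) (gaussianMeasure m₂ S₂) ≤
      4 * ‖parameterVector m₁ (S₁ - 1) - parameterVector m₂ (S₂ - 1)‖ := by
  obtain ⟨R, hR, hsymm, rfl⟩ := exists_symm_mul_self_eq_of_posDef hS₁
  have hR' : IsUnit R⁻¹.det := isUnit_nonsing_inv_det R hR
  have hinv_symm : R⁻¹ᵀ = R⁻¹ := by rw [transpose_nonsing_inv, hsymm]
  have hconj : R⁻¹ * (R * R) * R⁻¹ᵀ = 1 := by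
    rw [hinv_symm, nonsing_inv_mul_cancel_left _ _ hR, mul_nonsing_inv R hR]
  have hshift (m : Fin d → ℝ) : -(R⁻¹ *ᵥ m₁) + R⁻¹ *ᵥ m = R⁻¹ *ᵥ (m - m₁) := by
    rw [mulVec_sub, neg_add_eq_sub]
  rw [← tvDist_gaussianMeasure_affine (-(R⁻¹ *ᵥ m₁)) m₁ m₂ hR', hconj, neg_add_cancel, hshift]
  have hbound := inv_mulVec_dotProduct_self_le hR hsymm
    (dotProduct_self_le_two_mul_dotProduct_mulVec h)
  calc tvDist (gaussianMeasure 0 1) (gaussianMeasure (R⁻¹ *ᵥ (m₂ - m₁)) (R⁻¹ * S₂ * R⁻¹ᵀ))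
      ≤ 2 * ‖parameterVector (R⁻¹ *ᵥ (m₂ - m₁)) (R⁻¹ * S₂ * R⁻¹ᵀ - 1)‖ :=
        tvDist_zero_one_gaussianMeasure_le _ (posDef_mul_mul_transpose_of_isUnit_det hR' hS₂)
    _ = 2 * ‖parameterVector (R⁻¹ *ᵥ (m₂ - m₁)) (R⁻¹ * (S₂ - R * R) * R⁻¹ᵀ)‖ := by
        rw [mul_sub, sub_mul, hconj]
    _ ≤ 2 * (2 * ‖parameterVector (m₂ - m₁) (S₂ - R * R)‖) := by
        gcongr
        exact norm_parameterVector_conj_le one_le_two hbound _ _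
    _ = 4 * ‖parameterVector m₁ (R * R - 1) - parameterVector m₂ (S₂ - 1)‖ := by
        rw [norm_sub_rev, parameterVector_sub, sub_sub_sub_cancel_right]
        ring

lemma exists_measurableEquiv_map_eq_gaussianMeasure_zero_one {g : Measure (Fin d → ℝ)}
    (hg : g ∈ Gd d) :
    ∃ e : (Fin d → ℝ) ≃ᵐ (Fin d → ℝ), g.map e = gaussianMeasure 0 1 ∧
      ∀ g' ∈ Gd d, g'.map e ∈ Gd d := by
  obtain ⟨m, S, hS, rfl⟩ := mem_Gd_iff.1 hg
  obtain ⟨R, hR, hsymm, rfl⟩ := exists_symm_mul_self_eq_of_posDef hS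
  have hR' : IsUnit R⁻¹.det := isUnit_nonsing_inv_det R hR
  refine ⟨affineMeasurableEquiv (-(R⁻¹ *ᵥ m)) hR', ?_, fun g' hg' ↦ ?_⟩
  · rw [map_affineMeasurableEquiv_gaussianMeasure, neg_add_cancel, transpose_nonsing_inv, hsymm,
      nonsing_inv_mul_cancel_left _ _ hR, mul_nonsing_inv R hR]
  · obtain ⟨m', S', hS', rfl⟩ := mem_Gd_iff.1 hg'
    exact mem_Gd_iff.2 ⟨_, _, posDef_mul_mul_transpose_of_isUnit_det hR' hS',
      map_affineMeasurableEquiv_gaussianMeasure _ _ hR'⟩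

theorem exists_local_coordinates {g : Measure (Fin d → ℝ)} (hg : g ∈ Gd d) :
    ∃ Φ : Measure (Fin d → ℝ) → EuclideanSpace ℝ (Fin d ⊕ Fin d × Fin d),
      (∀ f ∈ Gd d, tvDist f g ≤ 1 / 300 → ‖Φ f‖ ≤ 50000 * tvDist f g) ∧
      ∀ f₁ ∈ Gd d, ∀ f₂ ∈ Gd d, tvDist f₁ g ≤ 1 / 300 →
        tvDist f₁ f₂ ≤ 4 * ‖Φ f₁ - Φ f₂‖ := by
  obtain ⟨e, hge, he⟩ := exists_measurableEquiv_map_eq_gaussianMeasure_zero_one hg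
  choose! m S hS hfe using fun f hf ↦ mem_Gd_iff.1 (he f hf)
  have htv (f : Measure (Fin d → ℝ)) (hf : f ∈ Gd d) :
      tvDist (gaussianMeasure 0 1) (gaussianMeasure (m f) (S f)) = tvDist f g := by
    rw [← hge, ← hfe f hf, tvDist_map_measurableEquiv, tvDist_comm]
  refine ⟨fun f ↦ parameterVector (m f) (S f - 1), fun f hf h ↦ ?_, fun f₁ hf₁ f₂ hf₂ h ↦ ?_⟩
  · rw [← htv f hf] at h ⊢
    exact (norm_parameterVector_le_of_tvDist_le (hS f hf) h).2
  · rw [← htv f₁ hf₁] at h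
    rw [← tvDist_map_measurableEquiv e, hfe f₁ hf₁, hfe f₂ hf₂]
    exact tvDist_gaussianMeasure_le_norm_parameterVector_sub (hS f₁ hf₁) (hS f₂ hf₂)
      (norm_parameterVector_le_of_tvDist_le (hS f₁ hf₁) h).1

end LocalCoordinates

section Packing

lemma card_le_of_pairwise_le_norm_sub {ι E : Type*} [NormedAddCommGroup E] [NormedSpace ℝ E]
    [FiniteDimensional ℝ E] {s : Finset ι} {f : ι → E} {R ρ : ℝ} (hR : 0 ≤ R) (hρ : 0 < ρ)
    (hs : ∀ i ∈ s, ‖f i‖ ≤ R) (hsep : (s : Set ι).Pairwise fun i j ↦ ρ ≤ ‖f i - f j‖) :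
    (s.card : ℝ) ≤ (1 + 2 * R / ρ) ^ Module.finrank ℝ E := by
  borelize E
  let μ : Measure E := Measure.addHaar
  have hμ : 0 < μ.real (Metric.ball 0 1) :=
    ENNReal.toReal_pos (Metric.measure_ball_pos μ 0 one_pos).ne' measure_ball_lt_top.ne
  have hball (x : E) {r : ℝ} (hr : 0 < r) :
      μ.real (Metric.ball x r) = r ^ Module.finrank ℝ E * μ.real (Metric.ball 0 1) := by
    rw [measureReal_def, μ.addHaar_ball_of_pos x hr, ENNReal.toReal_mul,
      ENNReal.toReal_ofReal (by positivity), measureReal_def]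
  have hdisj : (s : Set ι).PairwiseDisjoint fun i ↦ Metric.ball (f i) (ρ / 2) :=
    fun i hi j hj hij ↦ Metric.ball_disjoint_ball <| by
      rw [add_halves, dist_eq_norm]
      exact hsep hi hj hij
  have hsubset : ⋃ i ∈ s, Metric.ball (f i) (ρ / 2) ⊆ Metric.ball 0 (R + ρ / 2) :=
    Set.iUnion₂_subset fun i hi ↦ Metric.ball_subset_ball' <| by
      rw [dist_zero_right, add_comm]
      gcongr
      exact hs i hi
  have hvol : s.card * (ρ / 2) ^ Module.finrank ℝ E ≤ (R + ρ / 2) ^ Module.finrank ℝ E := by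
    refine le_of_mul_le_mul_right ?_ hμ
    calc s.card * (ρ / 2) ^ Module.finrank ℝ E * μ.real (Metric.ball 0 1)
        = μ.real (⋃ i ∈ s, Metric.ball (f i) (ρ / 2)) := by
          rw [measureReal_biUnion_finset hdisj fun _ _ ↦ measurableSet_ball]
          simp only [hball _ (half_pos hρ), Finset.sum_const, nsmul_eq_mul, mul_assoc]
      _ ≤ μ.real (Metric.ball 0 (R + ρ / 2)) := measureReal_mono hsubset measure_ball_lt_top.ne
      _ = (R + ρ / 2) ^ Module.finrank ℝ E * μ.real (Metric.ball 0 1) :=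
          hball 0 (by positivity)
  have hratio : 1 + 2 * R / ρ = (R + ρ / 2) / (ρ / 2) := by
    field_simp
    ring
  rwa [hratio, div_pow, le_div_iff₀ (by positivity)]

lemma finite_and_ncard_le_of_forall_finset {ι : Type*} {s : Set ι} {a : ℝ}
    (h : ∀ t : Finset ι, (t : Set ι) ⊆ s → (t.card : ℝ) ≤ a) : s.Finite ∧ (s.ncard : ℝ) ≤ a := by
  have hfin : s.Finite := by
    by_contra hinf
    obtain ⟨t, ht, hcard⟩ := Set.Infinite.exists_subset_card_eq hinf (⌊a⌋₊ + 1)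
    have := h t ht
    rw [hcard, Nat.cast_add_one] at this
    exact (Nat.lt_floor_add_one a).not_ge this
  refine ⟨hfin, ?_⟩
  rw [Set.ncard_eq_toFinset_card s hfin]
  exact h _ hfin.coe_toFinset.subset

end Packing

section Cover

lemma exists_isSeparated_isCover {X : Type*} (U : SetRel X X) [U.IsRefl] [U.IsSymm] (s : Set X) :
    ∃ N ⊆ s, U.IsSeparated N ∧ U.IsCover s N := by
  obtain ⟨N, hN⟩ := zorn_subset {N | N ⊆ s ∧ U.IsSeparated N} fun c hc hchain ↦
    ⟨⋃₀ c, ⟨Set.sUnion_subset fun N hN ↦ (hc hN).1,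
      (Set.pairwise_sUnion hchain.directedOn).2 fun N hN ↦ (hc hN).2⟩,
      fun _ ↦ Set.subset_sUnion_of_mem⟩
  exact ⟨N, hN.prop.1, hN.prop.2, .of_maximal_isSeparated hN⟩

variable {X : Type*} [MeasurableSpace X]

/-- The relation of being at total variation distance at most `ε`, whose covers and separated sets
are the `ε`-covers and `ε`-separated families of measures. -/
def tvRel (ε : ℝ) : SetRel (Measure X) (Measure X) := {p | tvDist p.1 p.2 ≤ ε}

lemma exists_tvRel_isSeparated_isCover {ε : ℝ} (hε : 0 ≤ ε) (F : Set (Measure X)) :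
    ∃ C ⊆ F, (tvRel ε).IsSeparated C ∧ (tvRel ε).IsCover F C := by
  have : (tvRel (X := X) ε).IsRefl := ⟨fun μ ↦ (tvDist_self μ).trans_le hε⟩
  have : (tvRel (X := X) ε).IsSymm := ⟨fun μ ν h ↦ (tvDist_comm ν μ).trans_le h⟩
  exact exists_isSeparated_isCover (tvRel ε) F

end Cover

section LocalSize

variable {d : ℕ}

lemma finite_and_ncard_le_of_tvRel_isSeparated {α : ℝ} (hα : α ∈ Set.Ioc (0 : ℝ) (1 / 600))
    {C : Set (Measure (Fin d → ℝ))} (hC : C ⊆ Gd d) (hsep : (tvRel α).IsSeparated C)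
    {g : Measure (Fin d → ℝ)} (hg : g ∈ Gd d) :
    {g' ∈ C | tvDist g' g ≤ 2 * α}.Finite ∧
      ({g' ∈ C | tvDist g' g ≤ 2 * α}.ncard : ℝ) ≤ (2 ^ 20) ^ (d + d * d) := by
  obtain ⟨hα₀, hα₁⟩ := hα
  obtain ⟨Φ, hΦ_norm, hΦ_sep⟩ := exists_local_coordinates hg
  refine finite_and_ncard_le_of_forall_finset fun t ht ↦ ?_
  have hclose : ∀ f ∈ t, tvDist f g ≤ 1 / 300 := fun f hf ↦ (ht hf).2.trans (by linarith)
  have hnorm : ∀ f ∈ t, ‖Φ f‖ ≤ 100000 * α := fun f hf ↦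
    (hΦ_norm f (hC (ht hf).1) (hclose f hf)).trans (by linarith [(ht hf).2])
  have hdist : (t : Set (Measure (Fin d → ℝ))).Pairwise fun f₁ f₂ ↦ α / 4 ≤ ‖Φ f₁ - Φ f₂‖ := by
    intro f₁ hf₁ f₂ hf₂ hne
    have hlt : α < tvDist f₁ f₂ := not_le.1 (hsep (ht hf₁).1 (ht hf₂).1 hne)
    linarith [hΦ_sep f₁ (hC (ht hf₁).1) f₂ (hC (ht hf₂).1) (hclose f₁ hf₁)]
  calc (t.card : ℝ)
      ≤ (1 + 2 * (100000 * α) / (α / 4)) ^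
          Module.finrank ℝ (EuclideanSpace ℝ (Fin d ⊕ Fin d × Fin d)) :=
        card_le_of_pairwise_le_norm_sub (by positivity) (by positivity) hnorm hdist
    _ = 800001 ^ (d + d * d) := by
        rw [finrank_euclideanSpace, Fintype.card_sum, Fintype.card_prod, Fintype.card_fin]
        congr 1
        field_simp
        norm_num
    _ ≤ (2 ^ 20) ^ (d + d * d) := by
        gcongr
        norm_num

lemma two_pow_pow_add_mul_self_le (k : ℕ) :
    ((2 : ℝ) ^ k) ^ (d + d * d) ≤ 2 ^ (((2 * k : ℕ) : ℝ) * (d : ℝ) ^ 2) := by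
  rw [← Nat.cast_pow, ← Nat.cast_mul, Real.rpow_natCast, ← pow_mul]
  refine pow_le_pow_right₀ one_le_two ?_
  nlinarith [Nat.mul_le_mul_left k (Nat.le_mul_self d)]

end LocalSize

theorem statement13 :
    ∃ c : ℝ, 0 < c ∧ ∀ d : ℕ, 1 ≤ d → ∀ α : ℝ, α ∈ Set.Ioc (0 : ℝ) (1 / 600) →
      ∃ C : Set (Measure (Fin d → ℝ)), C ⊆ Gd d ∧
        (∀ g ∈ Gd d, ∃ g' ∈ C, tvDist g g' ≤ α) ∧
        ∀ g ∈ Gd d, {g' ∈ C | tvDist g' g ≤ 2 * α}.Finite ∧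
          (({g' ∈ C | tvDist g' g ≤ 2 * α}.ncard : ℝ) ≤ (2 : ℝ) ^ (c * (d : ℝ) ^ 2)) := by
  refine ⟨(2 * 20 : ℕ), by norm_num, fun d _ α hα ↦ ?_⟩
  obtain ⟨C, hC, hsep, hcover⟩ := exists_tvRel_isSeparated_isCover hα.1.le (Gd d)
  refine ⟨C, hC, hcover, fun g hg ↦ ?_⟩
  obtain ⟨hfin, hcard⟩ := finite_and_ncard_le_of_tvRel_isSeparated hα hC hsep hg
  exact ⟨hfin, hcard.trans (two_pow_pow_add_mul_self_le 20)⟩
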